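/- Let σ be a permutation of {1,…,n} such that: (i) ij ∈ E if and only if σ(i)σ(j) ∈ E; (ii) for every i ∈ {1,…,n} there exists a linear symmetry T of P with T v_i = v_{σ(i)}; and (iii) for every edge ij ∈ E there exists a linear symmetry T of P with {T v_i, T v_j} = {v_{σ(i)}, v_{σ(j)}}. Then there exists a single linear symmetry T of P with T v_i = v_{σ(i)} for all i ∈ {1,…,n}. (The orbit coloring captures the linear symmetries of P.) -/

import Mathlib

/-!
The proof produces a quadratic form on `ℝⁿ` that only sees edges, is nonnegative on the vectors of
weighted mean zero, and vanishes there exactly on the vectors `i ↦ ⟪U, v i⟫`. After averaging over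
the linear symmetries of `P`, its coefficients are constant on orbits of vertices and of edges, so
`σ` preserves the form, hence permutes its zero vectors: for every `U` there is a `W` with
`⟪U, v (σ i)⟫ = ⟪W, v i⟫` for all `i`. The map `U ↦ W` is the transpose of the required symmetry.

The form plays the role of the Colin de Verdière matrix that Izmestiev obtains from the mixed
second derivatives of the volume of the polar body. Here it comes from the log-concave density
`exp (min_i (h i - ⟪U, v i⟫))` on `ℝᵈ`. Its logarithm is affine on the cells where a given index
attains the minimum; for `h = 0` these are the cones of the normal fan of `P`. Let `N i` be the mass
of the cell of `i`, and `w i j` the integral of the density over the interface of the cells of `i`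
and `j`, divided by `‖v i - v j‖`. An interface of positive weight exposes the edge `ij`. The form is

  `D(x) = ½ ∑ w i j (x i - x j)² - ∑ N i (x i)²`.

The logarithm of the density has its second derivatives concentrated on the interfaces, and the
assertion that `D ≥ 0` on `∑ N i x i = 0` is the Brascamp-Lieb variance inequality for the function
equal to `x i` on the cell of `i`. `row_sum`, the divergence theorem on each cell, shows that `D`
vanishes on linear functionals.

`rigidity` proves the inequality with its equality case by induction on the dimension. Slice by the
first coordinate `z` of `U`, write `n i`, `ρ` for the cell masses and the total mass of the slice,
and `a i` for the first coordinate of `v i`. A bounded solution `u` of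
`u' ρ = ∑ n i (x i + u a i)` exists precisely because `∑ N i x i = 0` (`exists_corrector`); its
boundedness rests on the exponential decay of `ρ` (`tail_bound`). Integration by parts then bounds
`D(x)` below by `∫ u'² ρ` plus the integral over `z` of the form of the slice at `x + u a`
(`slice_ineq`). In the equality case `u` is constant and `x + u a` is linear on almost every slice.
The linear functional does not depend on the slice, being locally constant in `z` (`glue`).
-/

namespace EdgeOrbit
open MeasureTheory Filter Topology Set

set_option linter.unusedSectionVars false

noncomputable section

/-! ### Minimum of affine functions, cells and interfaces -/

section

variable {ι : Type*} [Fintype ι] [Nonempty ι] {k : ℕ}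

/-- The minimum of a finite family of reals. -/
def mn (h : ι → ℝ) : ℝ := Finset.univ.inf' Finset.univ_nonempty h

theorem mn_le (h : ι → ℝ) (i : ι) : mn h ≤ h i := Finset.inf'_le _ (Finset.mem_univ i)

theorem exists_mn (h : ι → ℝ) : ∃ i, mn h = h i := by
  obtain ⟨i, -, hi⟩ := Finset.exists_mem_eq_inf' (Finset.univ_nonempty (α := ι)) h
  exact ⟨i, hi⟩

theorem le_mn {h : ι → ℝ} {c : ℝ} (H : ∀ i, c ≤ h i) : c ≤ mn h := by
  obtain ⟨i, hi⟩ := exists_mn h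
  rw [hi]; exact H i

theorem mn_eq {h : ι → ℝ} {i : ι} (H : ∀ j, h i ≤ h j) : mn h = h i :=
  le_antisymm (mn_le h i) (le_mn H)

theorem continuous_mn : Continuous (mn : (ι → ℝ) → ℝ) := by
  unfold mn
  exact Continuous.finset_inf'_apply _ fun i _ => continuous_apply i

theorem mn_add_le (h g : ι → ℝ) : mn (h + g) ≤ ‖h‖ + mn g := by
  obtain ⟨i, hi⟩ := exists_mn g
  rw [hi]
  refine (mn_le _ i).trans ?_
  have := norm_le_pi_norm h i
  have := le_abs_self (h i)
  simp only [Pi.add_apply, Real.norm_eq_abs] at *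
  linarith

theorem le_mn_add (h g : ι → ℝ) : mn g - ‖h‖ ≤ mn (h + g) := by
  refine le_mn fun i => ?_
  have := norm_le_pi_norm h i
  have := neg_abs_le (h i)
  have := mn_le g i
  simp only [Pi.add_apply, Real.norm_eq_abs] at *
  linarith

theorem mn_smul {r : ℝ} (hr : 0 ≤ r) (h : ι → ℝ) : mn (r • h) = r * mn h := by
  obtain ⟨i, hi⟩ := exists_mn h
  rw [hi]
  refine mn_eq (h := r • h) (i := i) fun j => ?_
  have := mn_le h j
  simp only [Pi.smul_apply, smul_eq_mul]
  rw [← hi]; gcongr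

/-- The vector of values `i ↦ ⟨y, A · i⟩`, where column `i` of `A` is regarded as a point of `ℝᵏ` and
row `p` of `A` lists the `p`-th coordinates of these points. -/
def comb (A : Fin k → ι → ℝ) (y : Fin k → ℝ) : ι → ℝ := fun i => ∑ j, y j * A j i

theorem comb_cons (A : Fin (k + 1) → ι → ℝ) (z : ℝ) (y : Fin k → ℝ) :
    comb A (Fin.cons z y) = z • A 0 + comb (Fin.tail A) y := by
  ext i
  simp [comb, Fin.sum_univ_succ, Fin.tail]

theorem comb_add (A : Fin k → ι → ℝ) (x y : Fin k → ℝ) :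
    comb A (x + y) = comb A x + comb A y := by
  ext i
  simp [comb, add_mul, Finset.sum_add_distrib]

theorem comb_smul (A : Fin k → ι → ℝ) (r : ℝ) (y : Fin k → ℝ) :
    comb A (r • y) = r • comb A y := by
  ext i
  simp [comb, Finset.mul_sum, mul_assoc]

theorem comb_zero (A : Fin k → ι → ℝ) : comb A 0 = 0 := by
  ext i; simp [comb]

theorem continuous_comb (A : Fin k → ι → ℝ) : Continuous (comb A) := by
  unfold comb; fun_prop

theorem comb_sub (A : Fin k → ι → ℝ) (x y : Fin k → ℝ) :
    comb A (x - y) = comb A x - comb A y := by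
  ext i
  simp [comb, sub_mul, Finset.sum_sub_distrib]

/-- Zero is an interior point of the convex hull of the columns of `A`, expressed through a uniform
lower bound for the support function. -/
def Coer (A : Fin k → ι → ℝ) : Prop := ∃ ε > 0, ∀ y, ∃ i, ε * ‖y‖ ≤ comb A y i

theorem norm_cons (z : ℝ) (y : Fin k → ℝ) :
    ‖(Fin.cons z y : Fin (k + 1) → ℝ)‖ = ‖(z, y)‖ := by
  rw [Prod.norm_def]
  apply le_antisymm
  · refine (pi_norm_le_iff_of_nonneg (by positivity)).2 fun i => ?_
    refine Fin.cases ?_ (fun j => ?_) i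
    · simp
    · simpa using Or.inr (norm_le_pi_norm y j)
  · refine max_le ?_ ((pi_norm_le_iff_of_nonneg (by positivity)).2 fun j => ?_)
    · simpa using norm_le_pi_norm (Fin.cons z y : Fin (k + 1) → ℝ) 0
    · simpa using norm_le_pi_norm (Fin.cons z y : Fin (k + 1) → ℝ) j.succ

theorem Coer.tail {A : Fin (k + 1) → ι → ℝ} (hA : Coer A) : Coer (Fin.tail A) := by
  obtain ⟨ε, hε, H⟩ := hA
  refine ⟨ε, hε, fun y => ?_⟩
  obtain ⟨i, hi⟩ := H (Fin.cons 0 y)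
  refine ⟨i, ?_⟩
  rw [comb_cons, norm_cons, Prod.norm_def] at hi
  simpa using hi

/-- The potential `y ↦ min_i (h i - comb A y i)` decays at least linearly. -/
theorem mn_sub_comb_le {A : Fin k → ι → ℝ} {ε : ℝ} (H : ∀ y, ∃ i, ε * ‖y‖ ≤ comb A y i)
    (h : ι → ℝ) (y : Fin k → ℝ) : mn (h - comb A y) ≤ ‖h‖ - ε * ‖y‖ := by
  obtain ⟨i, hi⟩ := H y
  have h1 := mn_le (h - comb A y) i
  have := norm_le_pi_norm h i
  have := le_abs_self (h i)
  simp only [Pi.sub_apply, Real.norm_eq_abs] at *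
  linarith

theorem mn_sub_comb_le' {A : Fin (k + 1) → ι → ℝ} {ε : ℝ} (H : ∀ y, ∃ i, ε * ‖y‖ ≤ comb A y i)
    (h : ι → ℝ) (z : ℝ) (y : Fin k → ℝ) :
    mn (h - z • A 0 - comb (Fin.tail A) y) ≤ ‖h‖ - ε * ‖(z, y)‖ := by
  have := mn_sub_comb_le H h (Fin.cons z y)
  rwa [comb_cons, norm_cons, ← sub_sub] at this

theorem integrable_exp_neg_norm {E : Type*} [NormedAddCommGroup E] [NormedSpace ℝ E]
    [FiniteDimensional ℝ E] [MeasurableSpace E] [BorelSpace E] (μ : Measure E)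
    [μ.IsAddHaarMeasure] {ε : ℝ} (hε : 0 < ε) (C : ℝ) :
    Integrable (fun y : E => Real.exp (C - ε * ‖y‖)) μ := by
  set r : ℝ := Module.finrank ℝ E + 1 with hr
  have hr0 : (Module.finrank ℝ E : ℝ) < r := by simp [hr]
  have h1 := integrable_one_add_norm (E := E) (μ := μ) hr0
  have h2 : ∃ K : ℝ, ∀ t : ℝ, 0 ≤ t → Real.exp (-ε * t) ≤ K * (1 + t) ^ (-r) := by
    obtain ⟨K, hK⟩ : ∃ K : ℝ, ∀ s : ℝ, 0 ≤ s → s ^ (Module.finrank ℝ E + 1) * Real.exp (-s) ≤ K := by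
      refine ⟨(Module.finrank ℝ E + 1).factorial, fun s hs => ?_⟩
      have := Real.pow_div_factorial_le_exp s hs (Module.finrank ℝ E + 1)
      rw [Real.exp_neg, ← div_eq_mul_inv, div_le_iff₀ (Real.exp_pos _)]
      rwa [div_le_iff₀ (by positivity), mul_comm] at this
    refine ⟨K * Real.exp ε / ε ^ (Module.finrank ℝ E + 1), fun t ht => ?_⟩
    have := hK (ε * (1 + t)) (by positivity)
    have h3 : (1 + t) ^ (-r) = ((1 + t) ^ (Module.finrank ℝ E + 1))⁻¹ := by
      rw [Real.rpow_neg (by positivity), hr]; norm_cast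
    rw [h3, ← div_eq_mul_inv, le_div_iff₀ (by positivity), le_div_iff₀ (by positivity)]
    calc Real.exp (-ε * t) * (1 + t) ^ (Module.finrank ℝ E + 1) * ε ^ (Module.finrank ℝ E + 1)
        = ((ε * (1 + t)) ^ (Module.finrank ℝ E + 1) * Real.exp (-(ε * (1 + t)))) * Real.exp ε := by
          rw [mul_pow, show -ε * t = -(ε * (1 + t)) + ε by ring, Real.exp_add]; ring
      _ ≤ K * Real.exp ε := by gcongr
  obtain ⟨K, hK⟩ := h2
  refine Integrable.mono' ((h1.const_mul K).const_mul (Real.exp C)) (by fun_prop) ?_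
  refine Eventually.of_forall fun y => ?_
  rw [Real.norm_eq_abs, abs_of_pos (Real.exp_pos _), sub_eq_add_neg, Real.exp_add]
  have := hK ‖y‖ (norm_nonneg y)
  rw [neg_mul] at this
  gcongr

theorem cons_eq : (fun p : ℝ × (Fin k → ℝ) => (Fin.cons p.1 p.2 : Fin (k+1) → ℝ)) =
    ⇑(MeasurableEquiv.piFinSuccAbove (fun _ : Fin (k+1) => ℝ) 0).symm := by
  funext p
  simp [MeasurableEquiv.piFinSuccAbove]
  rfl

/-- Prepending a coordinate identifies `ℝ × ℝᵏ` with `ℝᵏ⁺¹`, preserving Lebesgue measure. -/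
theorem mp_cons : MeasurePreserving (fun p : ℝ × (Fin k → ℝ) => (Fin.cons p.1 p.2 : Fin (k+1) → ℝ))
    (volume.prod volume) volume := by
  rw [cons_eq]
  exact (MeasureTheory.volume_preserving_piFinSuccAbove (fun _ : Fin (k+1) => ℝ) 0).symm

theorem me_cons : MeasurableEmbedding
    (fun p : ℝ × (Fin k → ℝ) => (Fin.cons p.1 p.2 : Fin (k+1) → ℝ)) := by
  rw [cons_eq]
  exact (MeasurableEquiv.piFinSuccAbove (fun _ : Fin (k+1) => ℝ) 0).symm.measurableEmbedding

theorem integral_cons {f : (Fin (k + 1) → ℝ) → ℝ} (hf : Integrable f) :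
    ∫ y, f y = ∫ z : ℝ, ∫ y : Fin k → ℝ, f (Fin.cons z y) := by
  rw [← mp_cons.integral_comp me_cons f]
  exact integral_prod (fun p : ℝ × (Fin k → ℝ) => f (Fin.cons p.1 p.2))
    ((mp_cons.integrable_comp_emb me_cons).2 hf)

open Classical in
/-- The density `exp (min h)` restricted to the cell of `i`, where `i` is the strict unique minimiser. -/
def nu (i : ι) (h : ι → ℝ) : ℝ := if ∀ j, j ≠ i → h i < h j then Real.exp (h i) else 0

open Classical in
/-- The density `exp (min h)` restricted to the interface of `i` and `j`, where these two indices and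
no others attain the minimum. -/
def G (i j : ι) (h : ι → ℝ) : ℝ :=
  if h i = h j ∧ ∀ l, l ≠ i → l ≠ j → h i < h l then Real.exp (h i) else 0

theorem nu_nonneg (i : ι) (h : ι → ℝ) : 0 ≤ nu i h := by
  unfold nu; split_ifs <;> positivity

theorem G_nonneg (i j : ι) (h : ι → ℝ) : 0 ≤ G i j h := by
  unfold G; split_ifs <;> positivity

theorem nu_le (i : ι) (h : ι → ℝ) : nu i h ≤ Real.exp (mn h) := by
  unfold nu; split_ifs with H
  · rw [mn_eq (i := i)]
    intro j
    rcases eq_or_ne j i with rfl | hj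
    · rfl
    · exact (H j hj).le
  · positivity

theorem G_le (i j : ι) (h : ι → ℝ) : G i j h ≤ Real.exp (mn h) := by
  unfold G; split_ifs with H
  · rw [mn_eq (i := i)]
    intro l
    rcases eq_or_ne l i with rfl | hi
    · rfl
    rcases eq_or_ne l j with rfl | hj
    · exact H.1.le
    · exact (H.2 l hi hj).le
  · positivity

theorem G_symm (i j : ι) (h : ι → ℝ) : G i j h = G j i h := by
  unfold G
  by_cases e : h i = h j
  · rw [e]
    congr 1
    simp only [true_and, eq_iff_iff]
    exact ⟨fun H l a b => H l b a, fun H l a b => H l b a⟩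
  · have e' : ¬ h j = h i := fun H => e H.symm
    simp [e, e']

theorem measurable_nu (i : ι) : Measurable (nu i : (ι → ℝ) → ℝ) := by
  unfold nu
  refine Measurable.ite ?_ (by fun_prop) measurable_const
  simp only [ofPred_forall]
  exact MeasurableSet.iInter fun j => MeasurableSet.iInter fun _ =>
    measurableSet_lt (measurable_pi_apply i) (measurable_pi_apply j)

theorem measurable_G (i j : ι) : Measurable (G i j : (ι → ℝ) → ℝ) := by
  unfold G
  refine Measurable.ite ?_ (by fun_prop) measurable_const
  simp only [ofPred_and, ofPred_forall]
  exact (measurableSet_eq_fun (measurable_pi_apply i) (measurable_pi_apply j)).inter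
    (MeasurableSet.iInter fun l => MeasurableSet.iInter fun _ => MeasurableSet.iInter fun _ =>
    measurableSet_lt (measurable_pi_apply i) (measurable_pi_apply l))

theorem nu_eq_zero {i j : ι} {h : ι → ℝ} (hj : j ≠ i) (H : h j ≤ h i) : nu i h = 0 := by
  unfold nu; rw [if_neg]; intro H'; exact absurd (H' j hj) (not_lt.2 H)

theorem nu_of_lt {i : ι} {h : ι → ℝ} (H : ∀ j, j ≠ i → h i < h j) : nu i h = Real.exp (h i) := by
  unfold nu; rw [if_pos H]

/-- Without ties the minimiser is unique. -/
theorem exists_argmin_of_inj {h : ι → ℝ} (H : Function.Injective h) :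
    ∃ i, ∀ j, j ≠ i → h i < h j := by
  obtain ⟨i, hi⟩ := exists_mn h
  refine ⟨i, fun j hj => lt_of_le_of_ne (hi ▸ mn_le h j) fun e => hj (H e.symm)⟩

theorem sum_nu_of_inj {h : ι → ℝ} (H : Function.Injective h) :
    ∑ i, nu i h = Real.exp (mn h) := by
  obtain ⟨i, hi⟩ := exists_argmin_of_inj H
  rw [Finset.sum_eq_single i]
  · rw [nu_of_lt hi, mn_eq (i := i)]
    intro j
    rcases eq_or_ne j i with rfl | hj
    · rfl
    · exact (hi j hj).le
  · intro j _ hj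
    exact nu_eq_zero hj.symm (hi j hj).le
  · simp

/-- The parameter `z` at which the coordinates `i` and `j` of `h - z • a` agree (junk if
`a i = a j`). -/
def zc (a : ι → ℝ) (i j : ι) (h : ι → ℝ) : ℝ := (h j - h i) / (a j - a i)

/-- The density at the point where the line `z ↦ h - z • a` crosses the interface of `i` and `j`, with
the Jacobian of the crossing; it is zero when `i = j`, by division by zero. -/
def om (a : ι → ℝ) (i j : ι) (h : ι → ℝ) : ℝ := G i j (h - zc a i j h • a) / |a i - a j|

/-- The mass of the cell of `i`. -/
def N (A : Fin k → ι → ℝ) (h : ι → ℝ) (i : ι) : ℝ := ∫ y, nu i (h - comb A y)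

/-- The total mass of the density `exp (min_i (h i - comb A y i))`. -/
def Z (A : Fin k → ι → ℝ) (h : ι → ℝ) : ℝ := ∫ y, Real.exp (mn (h - comb A y))

/-- The weight of the interface of `i` and `j`: the integral of the density over it, divided by the
distance of the columns `i` and `j` of `A`. The interface is parametrised by projecting out the first
coordinate, which turns the surface element into the Jacobian in `om`. -/
def w : {k : ℕ} → (Fin k → ι → ℝ) → (ι → ℝ) → ι → ι → ℝ
  | 0, _, _, _, _ => 0
  | k + 1, A, h, i, j => ∫ y : Fin k → ℝ, om (A 0) i j (h - comb (Fin.tail A) y)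

/-- No three of the planar points `(a i, h i)` are collinear; equivalently, no three coordinates of
`h - z • a` tie for any `z`, when `a` is injective. -/
def NC (h a : ι → ℝ) : Prop := ∀ i j l, i ≠ j → i ≠ l → j ≠ l →
  (h j - h i) * (a l - a i) ≠ (h l - h i) * (a j - a i)

/-- General position of `(A, h)`, along the flag of coordinate slices: the first coordinates are
distinct, almost every line in the first direction meets no triple tie, and almost every slice is
again in general position. -/
def Good : {k : ℕ} → (Fin k → ι → ℝ) → (ι → ℝ) → Prop
  | 0, _, h => Function.Injective h
  | k + 1, A, h => Function.Injective (A 0) ∧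
      (∀ᵐ y : Fin k → ℝ, NC (h - comb (Fin.tail A) y) (A 0)) ∧
      ∀ᵐ z : ℝ, Good (Fin.tail A) (h - z • A 0)

end

/-! ### Integration by parts against products of half-line indicators -/

section HalfLines
variable {ι : Type*} [DecidableEq ι]

open Classical in
/-- The indicator of the open half-line on which `s * (z - c)` is negative. -/
def halfInd (s c z : ℝ) : ℝ := if s * (z - c) < 0 then 1 else 0

/-- The product of the half-line indicators indexed by `J`, the indicator of a possibly
unbounded open interval. -/
def chi (s c : ι → ℝ) (J : Finset ι) (z : ℝ) : ℝ := ∏ l ∈ J, halfInd (s l) (c l) z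

theorem measurable_hl (s c : ℝ) : Measurable (halfInd s c) := by
  unfold halfInd
  refine Measurable.ite (measurableSet_lt (by fun_prop) (by fun_prop)) (by fun_prop) (by fun_prop)

theorem measurable_chi (s c : ι → ℝ) (J : Finset ι) : Measurable (chi s c J) := by
  unfold chi
  exact Finset.measurable_fun_prod _ fun l _ => measurable_hl _ _

theorem abs_chi_le (s c : ι → ℝ) (J : Finset ι) (z : ℝ) : ‖chi s c J z‖ ≤ 1 := by
  unfold chi
  rw [norm_prod]
  refine Finset.prod_le_one (fun _ _ => norm_nonneg _) fun l _ => ?_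
  unfold halfInd; split_ifs <;> simp

theorem chi_insert (s c : ι → ℝ) {J : Finset ι} {j : ι} (hj : j ∉ J) (z : ℝ) :
    chi s c (insert j J) z = halfInd (s j) (c j) z * chi s c J z := by
  unfold chi; rw [Finset.prod_insert hj]

theorem hl_left {s c z : ℝ} (hs : s ≠ 0) (hz : z < c) : halfInd s c z = halfInd s c (c - 1) := by
  unfold halfInd
  rcases hs.lt_or_gt with h | h
  · rw [if_neg (by nlinarith), if_neg (by nlinarith)]
  · rw [if_pos (by nlinarith), if_pos (by nlinarith)]

theorem hl_right {s c z : ℝ} (hs : s ≠ 0) (hz : c < z) : halfInd s c z = halfInd s c (c + 1) := by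
  unfold halfInd
  rcases hs.lt_or_gt with h | h
  · rw [if_pos (by nlinarith), if_pos (by nlinarith)]
  · rw [if_neg (by nlinarith), if_neg (by nlinarith)]

/-- The jump of a half-line indicator at its end point is the sign of `s`. -/
theorem hl_jump {s c : ℝ} (hs : s ≠ 0) : halfInd s c (c - 1) - halfInd s c (c + 1) = s / |s| := by
  unfold halfInd
  rcases hs.lt_or_gt with h | h
  · rw [if_neg (by nlinarith), if_pos (by nlinarith), abs_of_neg h]; field_simp; norm_num
  · rw [if_pos (by nlinarith), if_neg (by nlinarith), abs_of_pos h]; field_simp; norm_num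

theorem intervalIntegrable_mul_chi {s c : ι → ℝ} {J : Finset ι} {f : ℝ → ℝ} {α β : ℝ}
    (hf : IntervalIntegrable f volume α β) :
    IntervalIntegrable (fun z => f z * chi s c J z) volume α β := by
  rw [intervalIntegrable_iff] at *
  exact Integrable.mul_bdd (c := 1) hf (measurable_chi s c J).aestronglyMeasurable
    (Eventually.of_forall fun z => abs_chi_le s c J z)

open Classical in
/-- Integration by parts on an interval: the distributional derivative of `chi` is a sum of signed
point masses at the `c l`, each weighted by the remaining factors. The `c l` have to be distinct, as a
product of two jumps at the same point would not split in this way. -/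
theorem integral_mul_chi {s c : ι → ℝ} {f f' : ℝ → ℝ} {S : Set ℝ} (hS : S.Countable)
    (hfc : Continuous f) (hf : ∀ z ∉ S, HasDerivAt f (f' z) z)
    (hintg : ∀ α β, IntervalIntegrable f' volume α β) (J : Finset ι) :
    (∀ j ∈ J, s j ≠ 0) → (∀ j ∈ J, ∀ l ∈ J, j ≠ l → c j ≠ c l) →
    ∀ α β, α ≤ β → (∀ j ∈ J, c j ≠ α) → (∀ j ∈ J, c j ≠ β) →
    ∫ z in α..β, f' z * chi s c J z = chi s c J β * f β - chi s c J α * f α +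
      ∑ l ∈ J, s l / |s l| *
        (if α < c l ∧ c l < β then chi s c (J.erase l) (c l) * f (c l) else 0) := by
  induction J using Finset.induction_on with
  | empty =>
    intro _ _ α β hαβ _ _
    simp only [chi, Finset.prod_empty, mul_one, one_mul, Finset.sum_empty, add_zero]
    exact integral_eq_of_hasDerivAt_off_countable f f' hS hfc.continuousOn
      (fun x hx => hf x hx.2) (hintg _ _)
  | insert j J hj ih =>
    intro hs hc α β hαβ hcα hcβ
    have hs' : ∀ l ∈ J, s l ≠ 0 := fun l hl => hs l (Finset.mem_insert_of_mem hl)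
    have hsj : s j ≠ 0 := hs j (Finset.mem_insert_self _ _)
    have hc' : ∀ j ∈ J, ∀ l ∈ J, j ≠ l → c j ≠ c l := fun l hl m hm =>
      hc l (Finset.mem_insert_of_mem hl) m (Finset.mem_insert_of_mem hm)
    have hcj : ∀ l ∈ J, c l ≠ c j := fun l hl =>
      hc l (Finset.mem_insert_of_mem hl) j (Finset.mem_insert_self _ _) (fun e => hj (e ▸ hl))
    have hjα := hcα j (Finset.mem_insert_self _ _)
    have hjβ := hcβ j (Finset.mem_insert_self _ _)
    have hlα : ∀ l ∈ J, c l ≠ α := fun l hl => hcα l (Finset.mem_insert_of_mem hl)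
    have hlβ : ∀ l ∈ J, c l ≠ β := fun l hl => hcβ l (Finset.mem_insert_of_mem hl)
    have ih := ih hs' hc'
    have hchi : ∀ z, chi s c (insert j J) z = halfInd (s j) (c j) z * chi s c J z := chi_insert s c hj
    have herase : ∀ l ∈ J, ∀ z, chi s c ((insert j J).erase l) z
        = halfInd (s j) (c j) z * chi s c (J.erase l) z := fun l hl z => by
      rw [Finset.erase_insert_of_ne (fun e : j = l => hj (by rw [e]; exact hl)), chi_insert]
      exact fun h => hj (Finset.mem_of_mem_erase h)
    rw [Finset.sum_insert hj, Finset.erase_insert hj, hchi, hchi]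
    have hsum : ∀ κ : ℝ → ℝ, (∀ l ∈ J, α < c l → c l < β → halfInd (s j) (c j) (c l) = κ (c l)) →
        ∑ l ∈ J, s l / |s l| * (if α < c l ∧ c l < β then
          chi s c ((insert j J).erase l) (c l) * f (c l) else 0)
        = ∑ l ∈ J, s l / |s l| * (if α < c l ∧ c l < β then
          κ (c l) * (chi s c (J.erase l) (c l) * f (c l)) else 0) := by
      intro κ hκ
      refine Finset.sum_congr rfl fun l hl => ?_
      split_ifs with h
      · rw [herase l hl, hκ l hl h.1 h.2]; ring
      · rfl
    have hconst : ∀ κ α' β', α' ≤ β' → (∀ z, α' < z → z < β' → halfInd (s j) (c j) z = κ) →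
        (∫ z in α'..β', f' z * chi s c (insert j J) z)
          = κ * ∫ z in α'..β', f' z * chi s c J z := by
      intro κ α' β' hαβ' hκ
      rw [← intervalIntegral.integral_const_mul]
      refine intervalIntegral.integral_congr_uIoo fun z hz => ?_
      rw [uIoo_of_le hαβ'] at hz
      simp only [hchi, hκ z hz.1 hz.2]; ring
    by_cases hcase : α < c j ∧ c j < β
    · rw [if_pos hcase, hsum (fun z => halfInd (s j) (c j) z) (fun _ _ _ _ => rfl)]
      rw [← intervalIntegral.integral_add_adjacent_intervals
        (intervalIntegrable_mul_chi (hintg α (c j))) (intervalIntegrable_mul_chi (hintg (c j) β)),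
        hconst _ _ _ hcase.1.le (fun z _ hz => hl_left hsj hz),
        hconst _ _ _ hcase.2.le (fun z hz _ => hl_right hsj hz),
        ih α (c j) hcase.1.le hlα hcj, ih (c j) β hcase.2.le hcj hlβ,
        hl_left hsj hcase.1, hl_right hsj hcase.2, ← hl_jump (c := c j) hsj]
      have : ∑ l ∈ J, s l / |s l| * (if α < c l ∧ c l < β then
          halfInd (s j) (c j) (c l) * (chi s c (J.erase l) (c l) * f (c l)) else 0)
          = halfInd (s j) (c j) (c j - 1) * (∑ l ∈ J, s l / |s l| * (if α < c l ∧ c l < c j then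
          (chi s c (J.erase l) (c l) * f (c l)) else 0))
          + halfInd (s j) (c j) (c j + 1) * (∑ l ∈ J, s l / |s l| * (if c j < c l ∧ c l < β then
          (chi s c (J.erase l) (c l) * f (c l)) else 0)) := by
        rw [Finset.mul_sum, Finset.mul_sum, ← Finset.sum_add_distrib]
        refine Finset.sum_congr rfl fun l hl => ?_
        rcases (hcj l hl).lt_or_gt with h | h
        · rw [hl_left hsj h, if_neg (c := c j < c l ∧ c l < β) (fun H => absurd H.1 (not_lt.2 h.le))]
          have : c l < β := h.trans hcase.2
          simp only [this, h, and_true]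
          split_ifs <;> ring
        · rw [hl_right hsj h, if_neg (c := α < c l ∧ c l < c j) (fun H => absurd H.2 (not_lt.2 h.le))]
          have : α < c l := hcase.1.trans h
          simp only [this, h, true_and]
          split_ifs <;> ring
      rw [this]; ring
    · rw [if_neg hcase]
      obtain ⟨κ, hκ⟩ : ∃ κ, ∀ z, α ≤ z → z ≤ β → halfInd (s j) (c j) z = κ := by
        rcases hjα.lt_or_gt with h | h
        · exact ⟨_, fun z hz _ => hl_right hsj (h.trans_le hz)⟩
        · have : β < c j := lt_of_le_of_ne (not_lt.1 fun H => hcase ⟨h, H⟩) hjβ.symm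
          exact ⟨_, fun z _ hz => hl_left hsj (hz.trans_lt this)⟩
      rw [hsum (fun _ => κ) (fun l _ h1 h2 => hκ _ h1.le h2.le),
        hconst κ α β hαβ (fun z h1 h2 => hκ z h1.le h2.le), ih α β hαβ hlα hlβ,
        hκ α le_rfl hαβ, hκ β hαβ le_rfl]
      have : ∀ l, (if α < c l ∧ c l < β then κ * (chi s c (J.erase l) (c l) * f (c l)) else 0)
        = κ * (if α < c l ∧ c l < β then (chi s c (J.erase l) (c l) * f (c l)) else 0) := by
        intro l; split_ifs <;> ring
      simp only [this]
      rw [mul_add, Finset.mul_sum]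
      simp only [mul_left_comm κ]
      ring

end HalfLines

/-! ### Cell weights along a line -/

section

variable {ι : Type*} [Fintype ι] [Nonempty ι] {k : ℕ}

/-- Along a line, index `i` beats the indices in `J` on an intersection of half-lines bounded by the
crossing points `zc`. -/
theorem chi_eq [DecidableEq ι] {h a : ι → ℝ} (ha : Function.Injective a) (i : ι) (J : Finset ι) (hJ : i ∉ J) (z : ℝ) :
    chi (fun j => a j - a i) (fun j => zc a i j h) J z =
      (open Classical in if ∀ j ∈ J, h i - z * a i < h j - z * a j then 1 else 0) := by
  classical
  unfold chi halfInd
  rw [Finset.prod_ite_zero]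
  have : ∀ j ∈ J, ((a j - a i) * (z - zc a i j h) < 0 ↔ h i - z * a i < h j - z * a j) := by
    intro j hj
    have : a j - a i ≠ 0 := sub_ne_zero.2 fun e => hJ (ha e ▸ hj)
    have e : (a j - a i) * (z - zc a i j h) = (a j - a i) * z - (h j - h i) := by
      unfold zc; field_simp
    rw [e]; constructor <;> intro H <;> nlinarith
  have e : (∀ j ∈ J, (a j - a i) * (z - zc a i j h) < 0) ↔
      (∀ j ∈ J, h i - z * a i < h j - z * a j) := 
    ⟨fun H j hj => (this j hj).1 (H j hj), fun H j hj => (this j hj).2 (H j hj)⟩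
  simp only [e, Finset.prod_const_one]
  
theorem nu_eq_chi [DecidableEq ι] {h a : ι → ℝ} (ha : Function.Injective a) (i : ι) (z : ℝ) :
    nu i (h - z • a) = Real.exp (h i - z * a i) *
      chi (fun j => a j - a i) (fun j => zc a i j h) (Finset.univ.erase i) z := by
  rw [chi_eq ha i _ (by simp)]
  unfold nu
  simp

theorem G_eq_chi [DecidableEq ι] {h a : ι → ℝ} (ha : Function.Injective a) {i j : ι} (hij : j ≠ i) :
    G i j (h - zc a i j h • a) = chi (fun j => a j - a i) (fun j => zc a i j h)
      ((Finset.univ.erase i).erase j) (zc a i j h) * Real.exp (h i - zc a i j h * a i) := by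
  rw [chi_eq ha i _ (by simp)]
  unfold G
  have : h i - zc a i j h * a i = h j - zc a i j h * a j := by
    have : a j - a i ≠ 0 := sub_ne_zero.2 fun e => hij (ha e)
    have e : zc a i j h * (a j - a i) = h j - h i := by unfold zc; field_simp
    linarith
  simp only [Pi.sub_apply, Pi.smul_apply, smul_eq_mul, this, true_and]
  simp only [Finset.mem_erase, Finset.mem_univ, and_true, ite_mul, one_mul, zero_mul, and_imp]
  congr 1
  simp only [eq_iff_iff]
  exact ⟨fun H l h1 h2 => H l h2 h1, fun H l h1 h2 => H l h2 h1⟩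

/-- In general position the crossing points of a line with different interfaces of a cell are distinct. -/
theorem zc_ne {h a : ι → ℝ} (ha : Function.Injective a) (hNC : NC h a) {i j l : ι}
    (hij : j ≠ i) (hil : l ≠ i) (hjl : j ≠ l) : zc a i j h ≠ zc a i l h := by
  have h1 : a j - a i ≠ 0 := sub_ne_zero.2 fun e => hij (ha e)
  have h2 : a l - a i ≠ 0 := sub_ne_zero.2 fun e => hil (ha e)
  unfold zc
  intro e
  rw [div_eq_div_iff h1 h2] at e
  exact hNC i j l hij.symm hil.symm hjl e

/-- Integration of bounded functions against the cell weights along a line. -/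
theorem integrable_bdd_mul_nu {h a : ι → ℝ} {C ε : ℝ} (hε : 0 < ε)
    (hb : ∀ z : ℝ, mn (h - z • a) ≤ C - ε * ‖z‖) (i : ι) {f : ℝ → ℝ} (hf : Measurable f) {K : ℝ}
    (hK : ∀ z, |f z| ≤ K) : Integrable (fun z => f z * nu i (h - z • a)) := by
  refine Integrable.bdd_mul (c := K) ?_ hf.aestronglyMeasurable (Eventually.of_forall hK)
  refine Integrable.mono' (integrable_exp_neg_norm volume hε C)
    ((measurable_nu i).comp (by fun_prop)).aestronglyMeasurable (Eventually.of_forall fun z => ?_)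
  rw [Real.norm_eq_abs, abs_of_nonneg (nu_nonneg _ _)]
  exact (nu_le _ _).trans (Real.exp_le_exp.2 (hb z))

/-- Integration by parts against the weight of the cell of `i` along a line; the boundary terms sit at
the crossings with the interfaces of the cell. -/
theorem wf0 {h a : ι → ℝ} (ha : Function.Injective a) (hNC : NC h a) {C ε : ℝ} (hε : 0 < ε)
    (hb : ∀ z : ℝ, mn (h - z • a) ≤ C - ε * ‖z‖) (i : ι) {φ φ' : ℝ → ℝ} {S : Set ℝ}
    (hS : S.Countable) (hφ : Continuous φ) (hd : ∀ z ∉ S, HasDerivAt φ (φ' z) z)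
    (hm : Measurable φ') {K : ℝ} (hK : ∀ z, |φ z| ≤ K) (hK' : ∀ z, |φ' z| ≤ K) :
    ∫ z, φ' z * nu i (h - z • a) = a i * (∫ z, φ z * nu i (h - z • a)) -
      ∑ j, (a i - a j) * (φ (zc a i j h) * om a i j h) := by
  classical
  set s : ι → ℝ := fun j => a j - a i with hs
  set c : ι → ℝ := fun j => zc a i j h with hc
  set J : Finset ι := Finset.univ.erase i with hJ
  have i1 := integrable_bdd_mul_nu hε hb i hm hK'
  have i2 := integrable_bdd_mul_nu hε hb i hφ.measurable hK
  set f : ℝ → ℝ := fun z => φ z * Real.exp (h i - z * a i) with hf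
  set f' : ℝ → ℝ := fun z => (φ' z - a i * φ z) * Real.exp (h i - z * a i) with hf'
  have key := integral_mul_chi (s := s) (c := c) (f := f) (f' := f') hS (by fun_prop)
    (fun z hz => by
      have h1 : HasDerivAt (fun z => Real.exp (h i - z * a i))
          (Real.exp (h i - z * a i) * (0 - 1 * a i)) z :=
        (((hasDerivAt_const z (h i)).sub ((hasDerivAt_id z).mul_const (a i)))).exp
      exact ((hd z hz).mul h1).congr_deriv (by simp only [hf']; ring))
    (fun α β => by
      have h1 : IntervalIntegrable (fun z => Real.exp (h i - z * a i)) volume α β :=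
        Continuous.intervalIntegrable (by fun_prop) _ _
      rw [intervalIntegrable_iff] at *
      refine Integrable.bdd_mul (c := K + |a i| * K) h1
        (by fun_prop) (Eventually.of_forall fun z => ?_)
      refine (norm_sub_le _ _).trans ?_
      rw [norm_mul]
      have := hK z; have := hK' z
      simp only [Real.norm_eq_abs]
      gcongr)
    J (fun j hj => sub_ne_zero.2 fun e => by
        have := ha e; simp [hJ, this] at hj)
      (fun j hj l hl hjl => zc_ne ha hNC (by simpa [hJ] using hj) (by simpa [hJ] using hl) hjl)
  have hfun : ∀ z, f' z * chi s c J z = φ' z * nu i (h - z • a) - a i * (φ z * nu i (h - z • a)) := by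
    intro z; rw [nu_eq_chi ha]; simp only [hf']; ring
  have hfz : ∀ z, chi s c J z * f z = φ z * nu i (h - z • a) := by
    intro z; rw [nu_eq_chi ha]; simp only [hf]; ring
  simp only [hfun, hfz] at key
  have lim1 := intervalIntegral_tendsto_integral (i1.sub (i2.const_mul (a i)))
    tendsto_neg_atTop_atBot (tendsto_id (α := ℝ))
  have hbd : ∀ z, |φ z * nu i (h - z • a)| ≤ K * Real.exp (C - ε * ‖z‖) := by
    intro z
    rw [abs_mul, abs_of_nonneg (nu_nonneg _ _)]
    have h1 := (nu_le i (h - z • a)).trans (Real.exp_le_exp.2 (hb z))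
    exact mul_le_mul (hK z) h1 (nu_nonneg _ _) ((abs_nonneg _).trans (hK z))
  have hlim0 : Tendsto (fun R : ℝ => K * Real.exp (C - ε * R)) atTop (𝓝 0) := by
    rw [← mul_zero K]
    refine Tendsto.const_mul K (Real.tendsto_exp_atBot.comp ?_)
    exact tendsto_atBot_add_const_left _ C
      (tendsto_neg_atTop_atBot.comp (tendsto_id.const_mul_atTop hε))
  have hl1 : Tendsto (fun R : ℝ => φ R * nu i (h - R • a)) atTop (𝓝 0) := by
    refine squeeze_zero_norm' ?_ hlim0
    filter_upwards [eventually_ge_atTop 0] with R hR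
    have := hbd R
    rwa [Real.norm_eq_abs R, abs_of_nonneg hR] at this
  have hl2 : Tendsto (fun R : ℝ => φ (-R) * nu i (h - (-R) • a)) atTop (𝓝 0) := by
    refine squeeze_zero_norm' ?_ hlim0
    filter_upwards [eventually_ge_atTop 0] with R hR
    have := hbd (-R)
    rwa [Real.norm_eq_abs (-R), abs_neg, abs_of_nonneg hR] at this
  have lim2 := (hl1.sub hl2).add_const (∑ l ∈ J, s l / |s l| * (chi s c (J.erase l) (c l) * f (c l)))
  have hev : (fun R : ℝ => ∫ z in (-R)..R, (φ' z * nu i (h - z • a) - a i * (φ z * nu i (h - z • a))))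
      =ᶠ[atTop] fun R => φ R * nu i (h - R • a) - φ (-R) * nu i (h - (-R) • a) +
        (∑ l ∈ J, s l / |s l| * (chi s c (J.erase l) (c l) * f (c l))) := by
    have h1 : ∀ᶠ R : ℝ in atTop, ∀ j, |c j| < R :=
      eventually_all.2 fun j => eventually_gt_atTop _
    filter_upwards [h1, eventually_ge_atTop 0] with R hR hR0
    rw [key (-R) R (by linarith) (fun j _ => (abs_lt.1 (hR j)).1.ne')
      (fun j _ => (abs_lt.1 (hR j)).2.ne)]
    congr 1
    refine Finset.sum_congr rfl fun l _ => ?_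
    rw [if_pos (abs_lt.1 (hR l))]
  have lim1' := lim1.congr' hev
  have := tendsto_nhds_unique lim1' lim2
  simp only [sub_self, zero_add, Pi.sub_apply] at this
  rw [integral_sub i1 (i2.const_mul (a i)), integral_const_mul] at this
  rw [sub_eq_iff_eq_add] at this
  rw [this]
  have hsum : ∑ l ∈ J, s l / |s l| * (chi s c (J.erase l) (c l) * f (c l))
      = - ∑ j, (a i - a j) * (φ (zc a i j h) * om a i j h) := by
    rw [← Finset.sum_neg_distrib, ← Finset.add_sum_erase _ _ (Finset.mem_univ i)]
    simp only [sub_self, zero_mul, neg_zero, zero_add]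
    refine Finset.sum_congr rfl fun l hl => ?_
    have hl' : l ≠ i := by simpa [hJ] using hl
    unfold om
    rw [G_eq_chi ha hl', abs_sub_comm]
    simp only [hs, hf, hc, hJ]
    ring
  rw [hsum]; ring

end

/-! ### Interface weights and slicing -/

section

variable {ι : Type*} [Fintype ι] [Nonempty ι] {k : ℕ}

theorem om_self (a : ι → ℝ) (i : ι) (h : ι → ℝ) : om a i i h = 0 := by simp [om]

theorem om_nonneg (a : ι → ℝ) (i j : ι) (h : ι → ℝ) : 0 ≤ om a i j h :=
  div_nonneg (G_nonneg _ _ _) (abs_nonneg _)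

theorem zc_symm (a : ι → ℝ) (i j : ι) (h : ι → ℝ) : zc a i j h = zc a j i h := by
  unfold zc
  rw [← neg_sub (h i), ← neg_sub (a i), neg_div_neg_eq]

theorem om_symm (a : ι → ℝ) (i j : ι) (h : ι → ℝ) : om a i j h = om a j i h := by
  unfold om
  rw [zc_symm, G_symm, abs_sub_comm]

theorem measurable_zc (a : ι → ℝ) (i j : ι) : Measurable (zc a i j) := by
  unfold zc; fun_prop

theorem measurable_om (a : ι → ℝ) (i j : ι) : Measurable (om a i j) := by
  unfold om
  refine Measurable.div_const ((measurable_G i j).comp ?_) _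
  exact measurable_id.sub ((measurable_zc a i j).smul_const a)

/-- A planar change of variables: a line in the interface of `i` and `j` can be parametrised by either
of two coordinates, with the corresponding Jacobians. -/
theorem interface_cov {a b : ι → ℝ} {i j : ι} (ha : a i ≠ a j) (hb : b i ≠ b j) (h : ι → ℝ)
    (φ : ℝ → ℝ) :
    ∫ y : ℝ, φ (zc a i j (h - y • b)) * om a i j (h - y • b)
      = ∫ z : ℝ, φ z * om b i j (h - z • a) := by
  have ha' : a j - a i ≠ 0 := sub_ne_zero.2 ha.symm
  have hb' : b j - b i ≠ 0 := sub_ne_zero.2 hb.symm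
  set p := (h j - h i) / (a j - a i)
  set q := -((b j - b i) / (a j - a i)) with hq
  have hq0 : q ≠ 0 := neg_ne_zero.2 (div_ne_zero hb' ha')
  have hz : ∀ y : ℝ, zc a i j (h - y • b) = p + q * y := by
    intro y
    simp only [zc, Pi.sub_apply, Pi.smul_apply, smul_eq_mul, p, q]
    field_simp
    ring
  have hy : ∀ y : ℝ, zc b i j (h - (p + q * y) • a) = y := by
    intro y
    simp only [zc, Pi.sub_apply, Pi.smul_apply, smul_eq_mul, p, q]
    field_simp
    ring
  have h1 : ∫ z : ℝ, φ z * om b i j (h - z • a)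
      = |q| * ∫ y : ℝ, φ (p + q * y) * om b i j (h - (p + q * y) • a) := by
    rw [← integral_add_left_eq_self (fun z => φ z * om b i j (h - z • a)) p]
    rw [Measure.integral_comp_mul_left (fun z => φ (p + z) * om b i j (h - (p + z) • a)) q,
      smul_eq_mul, ← mul_assoc, ← abs_mul, mul_inv_cancel₀ hq0, abs_one, one_mul]
  rw [h1, ← integral_const_mul]
  refine integral_congr_ae (Eventually.of_forall fun y => ?_)
  simp only [hz]
  unfold om
  rw [hy, hz]
  have e1 : |q| = |b i - b j| / |a i - a j| := by
    rw [hq, abs_neg, abs_div, abs_sub_comm (b j), abs_sub_comm (a j)]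
  have e2 : h - y • b - (p + q * y) • a = h - (p + q * y) • a - y • b := sub_right_comm _ _ _
  have e3 : |b i - b j| ≠ 0 := abs_ne_zero.2 (sub_ne_zero.2 hb)
  rw [e1, e2]
  field_simp

/-- The integral of `φ(z)` over the interface of `i` and `j`, where `z` is the first coordinate, with
the normalisation of `w`. -/
def Om (A : Fin (k + 1) → ι → ℝ) (h : ι → ℝ) (i j : ι) (φ : ℝ → ℝ) : ℝ :=
  ∫ y : Fin k → ℝ, φ (zc (A 0) i j (h - comb (Fin.tail A) y)) *
    om (A 0) i j (h - comb (Fin.tail A) y)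

theorem w_eq_Om (A : Fin (k + 1) → ι → ℝ) (h : ι → ℝ) (i j : ι) :
    w A h i j = Om A h i j fun _ => 1 := by
  simp [w, Om]

theorem w_symm {A : Fin k → ι → ℝ} (h : ι → ℝ) (i j : ι) : w A h i j = w A h j i := by
  cases k with
  | zero => rfl
  | succ k => simp only [w]; simp only [om_symm _ i j]

theorem w_self {A : Fin k → ι → ℝ} (h : ι → ℝ) (i : ι) : w A h i i = 0 := by
  cases k with
  | zero => rfl
  | succ k => simp [w, om_self]

theorem Om_symm (A : Fin (k + 1) → ι → ℝ) (h : ι → ℝ) (i j : ι) (φ : ℝ → ℝ) :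
    Om A h i j φ = Om A h j i φ := by
  simp only [Om, om_symm _ i j, zc_symm _ i j]

theorem om_le {A : Fin (k + 1) → ι → ℝ} {ε : ℝ} (H : ∀ y, ∃ i, ε * ‖y‖ ≤ comb A y i)
    (h : ι → ℝ) (i j : ι) (y : Fin k → ℝ) :
    om (A 0) i j (h - comb (Fin.tail A) y) ≤
      |A 0 i - A 0 j|⁻¹ * Real.exp (‖h‖ - ε * ‖(zc (A 0) i j (h - comb (Fin.tail A) y), y)‖) := by
  unfold om
  rw [div_eq_inv_mul]
  refine mul_le_mul_of_nonneg_left ?_ (by positivity)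
  refine (G_le _ _ _).trans (Real.exp_le_exp.2 ?_)
  rw [sub_right_comm]
  exact mn_sub_comb_le' H h _ y

theorem integrable_Om {A : Fin (k + 1) → ι → ℝ} {ε : ℝ} (hε : 0 < ε)
    (H : ∀ y, ∃ i, ε * ‖y‖ ≤ comb A y i)
    (h : ι → ℝ) (i j : ι) {φ : ℝ → ℝ} (hφ : Measurable φ) {K : ℝ} (hK : ∀ z, |φ z| ≤ K) :
    Integrable (fun y : Fin k → ℝ => φ (zc (A 0) i j (h - comb (Fin.tail A) y)) *
      om (A 0) i j (h - comb (Fin.tail A) y)) := by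
  have hc := continuous_comb (Fin.tail A)
  have hm : Measurable fun y => h - comb (Fin.tail A) y := by fun_prop
  refine Integrable.bdd_mul (c := K) ?_
    (hφ.comp ((measurable_zc _ i j).comp hm)).aestronglyMeasurable (Eventually.of_forall fun _ => hK _)
  refine Integrable.mono' ((integrable_exp_neg_norm volume hε ‖h‖).const_mul (|A 0 i - A 0 j|⁻¹))
    ((measurable_om _ i j).comp hm).aestronglyMeasurable (Eventually.of_forall fun y => ?_)
  rw [Real.norm_eq_abs, abs_of_nonneg (om_nonneg _ _ _ _)]
  refine (om_le H h i j y).trans ?_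
  gcongr
  exact le_max_right _ _

theorem integrable_nu {A : Fin k → ι → ℝ} (hA : Coer A) (h : ι → ℝ) (i : ι) :
    Integrable (fun y => nu i (h - comb A y)) := by
  obtain ⟨ε, hε, H⟩ := hA
  have hc := continuous_comb A
  refine Integrable.mono' (integrable_exp_neg_norm volume hε ‖h‖)
    ((measurable_nu i).comp (by fun_prop)).aestronglyMeasurable (Eventually.of_forall fun y => ?_)
  rw [Real.norm_eq_abs, abs_of_nonneg (nu_nonneg _ _)]
  exact (nu_le _ _).trans (Real.exp_le_exp.2 (mn_sub_comb_le H h y))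

theorem integrable_exp_mn {A : Fin k → ι → ℝ} (hA : Coer A) (h : ι → ℝ) :
    Integrable (fun y => Real.exp (mn (h - comb A y))) := by
  obtain ⟨ε, hε, H⟩ := hA
  have hc := continuous_comb A
  have hm := continuous_mn (ι := ι)
  refine Integrable.mono' (integrable_exp_neg_norm volume hε ‖h‖)
    (by fun_prop) (Eventually.of_forall fun y => ?_)
  rw [Real.norm_eq_abs, abs_of_nonneg (Real.exp_pos _).le]
  exact Real.exp_le_exp.2 (mn_sub_comb_le H h y)

/-- Joint integrability of the cell weights in `(z, y)`. -/
theorem integrable_nu_prod {A : Fin (k + 1) → ι → ℝ} (hA : Coer A) (h : ι → ℝ) (i : ι)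
    {f : ℝ → ℝ} (hf : Measurable f) {K : ℝ} (hK : ∀ z, |f z| ≤ K) :
    Integrable (fun p : ℝ × (Fin k → ℝ) => f p.1 * nu i (h - p.1 • A 0 - comb (Fin.tail A) p.2))
      (volume.prod volume) := by
  obtain ⟨ε, hε, H⟩ := hA
  have hc := continuous_comb (Fin.tail A)
  refine Integrable.bdd_mul (c := K) ?_ (hf.comp measurable_fst).aestronglyMeasurable
    (Eventually.of_forall fun _ => hK _)
  refine Integrable.mono' (integrable_exp_neg_norm _ hε ‖h‖)
    ((measurable_nu i).comp (by fun_prop)).aestronglyMeasurable (Eventually.of_forall fun p => ?_)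
  rw [Real.norm_eq_abs, abs_of_nonneg (nu_nonneg _ _)]
  exact (nu_le _ _).trans (Real.exp_le_exp.2 (mn_sub_comb_le' H h p.1 p.2))

theorem integrable_exp_mn_prod {A : Fin (k + 1) → ι → ℝ} (hA : Coer A) (h : ι → ℝ) :
    Integrable (fun p : ℝ × (Fin k → ℝ) => Real.exp (mn (h - p.1 • A 0 - comb (Fin.tail A) p.2)))
      (volume.prod volume) := by
  obtain ⟨ε, hε, H⟩ := hA
  have hc := continuous_comb (Fin.tail A)
  have hm := continuous_mn (ι := ι)
  refine Integrable.mono' (integrable_exp_neg_norm _ hε ‖h‖)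
    (by fun_prop) (Eventually.of_forall fun p => ?_)
  rw [Real.norm_eq_abs, abs_of_nonneg (Real.exp_pos _).le]
  exact Real.exp_le_exp.2 (mn_sub_comb_le' H h p.1 p.2)

theorem integrable_mul_N {A : Fin (k + 1) → ι → ℝ} (hA : Coer A) (h : ι → ℝ) (i : ι)
    {f : ℝ → ℝ} (hf : Measurable f) {K : ℝ} (hK : ∀ z, |f z| ≤ K) :
    Integrable (fun z => f z * N (Fin.tail A) (h - z • A 0) i) := by
  have := (integrable_nu_prod hA h i hf hK).integral_prod_left
  simp only [integral_const_mul] at this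
  exact this

theorem N_succ {A : Fin (k + 1) → ι → ℝ} (hA : Coer A) (h : ι → ℝ) (i : ι) :
    N A h i = ∫ z : ℝ, N (Fin.tail A) (h - z • A 0) i := by
  unfold N
  rw [integral_cons (integrable_nu hA h i)]
  simp only [comb_cons, sub_sub]

theorem Z_succ {A : Fin (k + 1) → ι → ℝ} (hA : Coer A) (h : ι → ℝ) :
    Z A h = ∫ z : ℝ, Z (Fin.tail A) (h - z • A 0) := by
  unfold Z
  rw [integral_cons (integrable_exp_mn hA h)]
  simp only [comb_cons, sub_sub]

/-- Integration by parts against the cell weights of the slices. -/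
theorem wf {A : Fin (k + 1) → ι → ℝ} {h : ι → ℝ} (hA : Coer A) (hG : Good A h) (i : ι)
    {φ φ' : ℝ → ℝ} {S : Set ℝ}
    (hS : S.Countable) (hφ : Continuous φ) (hd : ∀ z ∉ S, HasDerivAt φ (φ' z) z)
    (hm : Measurable φ') {K : ℝ} (hK : ∀ z, |φ z| ≤ K) (hK' : ∀ z, |φ' z| ≤ K) :
    ∫ z, φ' z * N (Fin.tail A) (h - z • A 0) i =
      A 0 i * (∫ z, φ z * N (Fin.tail A) (h - z • A 0) i) -
      ∑ j, (A 0 i - A 0 j) * Om A h i j φ := by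
  obtain ⟨ha, hNC, -⟩ := hG
  have hswap : ∀ {f : ℝ → ℝ}, Measurable f → (∀ z, |f z| ≤ K) →
      Integrable (fun y : Fin k → ℝ => ∫ z, f z * nu i (h - comb (Fin.tail A) y - z • A 0)) ∧
      ∫ z, f z * N (Fin.tail A) (h - z • A 0) i
        = ∫ y : Fin k → ℝ, ∫ z, f z * nu i (h - comb (Fin.tail A) y - z • A 0) := by
    intro f hf hfK
    have h1 := integrable_nu_prod hA h i hf hfK
    have h2 := h1.swap.integral_prod_left
    have h3 := integral_integral_swap
      (f := fun z y => f z * nu i (h - z • A 0 - comb (Fin.tail A) y)) h1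
    simp only [sub_right_comm h _ (comb _ _), N, ← integral_const_mul] at h2 h3 ⊢
    exact ⟨h2, h3⟩
  obtain ⟨ε, hε, H⟩ := hA
  rw [(hswap hm hK').2, (hswap hφ.measurable hK).2]
  have hline : ∀ᵐ y : Fin k → ℝ, ∫ z, φ' z * nu i (h - comb (Fin.tail A) y - z • A 0)
      = A 0 i * (∫ z, φ z * nu i (h - comb (Fin.tail A) y - z • A 0)) -
        ∑ j, (A 0 i - A 0 j) * (φ (zc (A 0) i j (h - comb (Fin.tail A) y)) *
          om (A 0) i j (h - comb (Fin.tail A) y)) := by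
    filter_upwards [hNC] with y hy
    refine wf0 ha hy (C := ‖h‖) hε (fun z => ?_) i hS hφ hd hm hK hK'
    rw [sub_right_comm]
    refine (mn_sub_comb_le' H h z y).trans ?_
    gcongr
    exact le_max_left _ _
  rw [integral_congr_ae hline, integral_sub ((hswap hφ.measurable hK).1.const_mul _),
    integral_const_mul, integral_finsetSum]
  · simp only [integral_const_mul]; rfl
  · exact fun j _ => (integrable_Om hε H h i j hφ.measurable hK).const_mul _
  · exact integrable_finsetSum _ fun j _ =>
      (integrable_Om hε H h i j hφ.measurable hK).const_mul _

/-- Fubini on an interface: if the slices have positive dimension, integrating `φ(z)` over the interface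
amounts to integrating `φ` against the interface weights of the slices. -/
theorem Om_succ {A : Fin (k + 2) → ι → ℝ} {h : ι → ℝ} (hA : Coer A) (hG : Good A h) (i j : ι)
    {φ : ℝ → ℝ} (hφ : Measurable φ) {K : ℝ} (hK : ∀ z, |φ z| ≤ K) :
    Integrable (fun z => φ z * w (Fin.tail A) (h - z • A 0) i j) ∧
    Om A h i j φ = ∫ z, φ z * w (Fin.tail A) (h - z • A 0) i j := by
  rcases eq_or_ne i j with rfl | hij
  · simp [w_self, Om, om_self]
  obtain ⟨ha, -, hae⟩ := hG
  have hb : Function.Injective (Fin.tail A 0) := by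
    obtain ⟨z, hz⟩ := hae.exists
    exact hz.1
  obtain ⟨ε, hε, H⟩ := hA
  set a := A 0 with ha'
  set b := Fin.tail A 0 with hb'
  set A'' := Fin.tail (Fin.tail A) with hA''
  have hc := continuous_comb A''
  have I1 := integrable_Om hε H h i j hφ hK
  have I1' := (mp_cons.integrable_comp_emb me_cons).2 I1
  -- joint integrability over the interface, parametrised by `(z, y)`
  have I2 : Integrable (fun p : ℝ × (Fin k → ℝ) => φ p.1 * om b i j (h - p.1 • a - comb A'' p.2))
      (volume.prod volume) := by
    refine Integrable.bdd_mul (c := K) ?_ (hφ.comp measurable_fst).aestronglyMeasurable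
      (Eventually.of_forall fun _ => hK _)
    refine Integrable.mono' ((integrable_exp_neg_norm _ hε ‖h‖).const_mul (|b i - b j|⁻¹))
      ((measurable_om b i j).comp (by fun_prop)).aestronglyMeasurable
      (Eventually.of_forall fun p => ?_)
    rw [Real.norm_eq_abs, abs_of_nonneg (om_nonneg _ _ _ _)]
    unfold om
    rw [div_eq_inv_mul]
    refine mul_le_mul_of_nonneg_left ?_ (by positivity)
    refine (G_le _ _ _).trans (Real.exp_le_exp.2 ?_)
    have := mn_sub_comb_le' H h p.1 (Fin.cons (zc b i j (h - p.1 • a - comb A'' p.2)) p.2)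
    rw [comb_cons, ← sub_sub, sub_right_comm (h - p.1 • A 0)] at this
    refine this.trans ?_
    rw [Prod.norm_def, norm_cons, Prod.norm_def, Prod.norm_def]
    gcongr
    exact le_max_right _ _
  have e1 : ∀ z, φ z * w (Fin.tail A) (h - z • a) i j
      = ∫ y : Fin k → ℝ, φ z * om b i j (h - z • a - comb A'' y) := by
    intro z
    rw [integral_const_mul]; rfl
  simp only [e1]
  refine ⟨I2.integral_prod_left, ?_⟩
  rw [integral_integral_swap I2]
  unfold Om
  rw [integral_cons I1, integral_integral_swap (f := fun z (y : Fin k → ℝ) =>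
    φ (zc (A 0) i j (h - comb (Fin.tail A) (Fin.cons z y))) *
      om (A 0) i j (h - comb (Fin.tail A) (Fin.cons z y))) I1']
  refine integral_congr_ae (Eventually.of_forall fun y => ?_)
  have := interface_cov (a := a) (b := b) (i := i) (j := j) (fun e => hij (ha e))
    (fun e => hij (hb e)) (h - comb A'' y) φ
  simp only [comb_cons, ← sub_sub] at this ⊢
  simp only [sub_right_comm h _ (comb (Fin.tail (Fin.tail A)) y), sub_right_comm h _ (comb A'' y)]
  exact this

/-- Version of `Om_succ` valid in all dimensions. It can be strict when the slices are points: these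
carry no interfaces, whereas the interfaces on a line have weight. -/
theorem Om_ge {A : Fin (k + 1) → ι → ℝ} {h : ι → ℝ} (hA : Coer A) (hG : Good A h) (i j : ι)
    {φ : ℝ → ℝ} (hφ : Measurable φ) {K : ℝ} (hK : ∀ z, |φ z| ≤ K) (hφ0 : ∀ z, 0 ≤ φ z) :
    Integrable (fun z => φ z * w (Fin.tail A) (h - z • A 0) i j) ∧
    ∫ z, φ z * w (Fin.tail A) (h - z • A 0) i j ≤ Om A h i j φ := by
  cases k with
  | zero =>
    simp only [w, mul_zero, integral_zero]
    refine ⟨integrable_zero _ _ _, ?_⟩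
    unfold Om
    exact integral_nonneg fun y => mul_nonneg (hφ0 _) (om_nonneg _ _ _ _)
  | succ k =>
    obtain ⟨h1, h2⟩ := Om_succ hA hG i j hφ hK
    exact ⟨h1, h2.ge⟩

end

/-! ### Balance identities and regularity of the slice masses -/

section

variable {ι : Type*} [Fintype ι] [Nonempty ι]

theorem Good.tail_ae {k : ℕ} {A : Fin (k + 1) → ι → ℝ} {h : ι → ℝ} (hG : Good A h) :
    ∀ᵐ z : ℝ, Good (Fin.tail A) (h - z • A 0) := hG.2.2

/-- The divergence theorem on the cell of `i`, applied to the density and the `p`-th coordinate field. -/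
theorem row_sum : ∀ {k : ℕ} {A : Fin k → ι → ℝ} {h : ι → ℝ}, Coer A → Good A h → ∀ (p : Fin k) (i : ι),
    ∑ j, (A p i - A p j) * w A h i j = A p i * N A h i
  | 0, _, _, _, _, p, _ => p.elim0
  | k + 1, A, h, hA, hG, p, i => by
    refine Fin.cases ?_ (fun q => ?_) p
    · have := wf hA hG i (φ := fun _ => 1) (φ' := fun _ => 0) (S := ∅) (K := 1) countable_empty
        continuous_const (fun z _ => hasDerivAt_const z 1) measurable_const (by simp) (by simp)
      simp only [zero_mul, integral_zero, one_mul, ← N_succ hA, ← w_eq_Om] at this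
      linarith
    · cases k with
      | zero => exact q.elim0
      | succ k =>
        have hw := fun j => Om_succ hA hG i j (φ := fun _ => 1) (K := 1) measurable_const (by simp)
        simp only [one_mul, ← w_eq_Om] at hw
        rw [N_succ hA, ← integral_const_mul]
        simp only [fun j => (hw j).2, ← integral_const_mul]
        rw [← integral_finsetSum _ fun j _ => (hw j).1.const_mul _]
        refine integral_congr_ae ?_
        filter_upwards [hG.tail_ae] with z hz
        exact row_sum hA.tail hz q i

/-- Linear functionals have weighted mean zero. -/
theorem sum_span {k : ℕ} {A : Fin k → ι → ℝ} {h : ι → ℝ} (hA : Coer A) (hG : Good A h)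
    (X : Fin k → ℝ) : ∑ i, N A h i * comb A X i = 0 := by
  have h1 : ∀ p, ∑ i, N A h i * A p i = 0 := by
    intro p
    have e : ∑ i, N A h i * A p i = ∑ i, ∑ j, (A p i - A p j) * w A h i j :=
      Finset.sum_congr rfl fun i _ => by rw [row_sum hA hG, mul_comm]
    have e2 : ∑ i, ∑ j, (A p i - A p j) * w A h i j = - ∑ i, ∑ j, (A p i - A p j) * w A h i j := by
      conv_rhs => rw [Finset.sum_comm]
      simp only [← Finset.sum_neg_distrib]
      refine Finset.sum_congr rfl fun i _ => Finset.sum_congr rfl fun j _ => ?_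
      rw [w_symm h j i]; ring
    linarith
  simp only [comb, Finset.mul_sum]
  rw [Finset.sum_comm]
  refine Finset.sum_eq_zero fun p _ => ?_
  have := congrArg (X p * ·) (h1 p)
  simp only [Finset.mul_sum, mul_zero] at this
  rw [← this]
  exact Finset.sum_congr rfl fun i _ => by ring

/-- The quadratic form vanishes on linear functionals. -/
theorem D_span {k : ℕ} {A : Fin k → ι → ℝ} {h : ι → ℝ} (hA : Coer A) (hG : Good A h)
    (X : Fin k → ℝ) : (∑ i, ∑ j, w A h i j * (comb A X i - comb A X j) ^ 2) / 2
      - ∑ i, N A h i * comb A X i ^ 2 = 0 := by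
  set x := comb A X with hx
  have h1 : ∀ i, ∑ j, (x i - x j) * w A h i j = x i * N A h i := by
    intro i
    have : ∀ j, (x i - x j) * w A h i j = ∑ p, X p * ((A p i - A p j) * w A h i j) := by
      intro j
      simp only [hx, comb]
      rw [← Finset.sum_sub_distrib, Finset.sum_mul]
      exact Finset.sum_congr rfl fun p _ => by ring
    simp only [this]
    rw [Finset.sum_comm]
    simp only [← Finset.mul_sum, row_sum hA hG]
    simp only [hx, comb, Finset.sum_mul]
    exact Finset.sum_congr rfl fun p _ => by ring
  have e1 : ∑ i, N A h i * x i ^ 2 = ∑ i, ∑ j, x i * ((x i - x j) * w A h i j) :=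
    Finset.sum_congr rfl fun i _ => by rw [← Finset.mul_sum, h1]; ring
  have e2 : ∑ i, N A h i * x i ^ 2 = ∑ i, ∑ j, x j * ((x j - x i) * w A h i j) := by
    rw [e1, Finset.sum_comm]
    exact Finset.sum_congr rfl fun i _ => Finset.sum_congr rfl fun j _ => by rw [w_symm h j i]
  have e3 : (∑ i, N A h i * x i ^ 2) + ∑ i, N A h i * x i ^ 2 =
      ∑ i, ∑ j, w A h i j * (x i - x j) ^ 2 := by
    nth_rewrite 1 [e1]
    rw [e2]
    simp only [← Finset.sum_add_distrib]
    exact Finset.sum_congr rfl fun i _ => Finset.sum_congr rfl fun j _ => by ring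
  linarith

variable {k : ℕ}

theorem hyperplane_null {d : Fin k → ℝ} (hd : d ≠ 0) (c : ℝ) :
    ∀ᵐ y : Fin k → ℝ, ∑ j, y j * d j ≠ c := by
  let L : (Fin k → ℝ) →ₗ[ℝ] ℝ :=
    { toFun := fun y => ∑ j, y j * d j
      map_add' := fun x y => by simp [add_mul, Finset.sum_add_distrib]
      map_smul' := fun r y => by simp [Finset.mul_sum, mul_assoc] }
  have hL : ∀ y, L y = ∑ j, y j * d j := fun y => rfl
  by_cases hne : ∃ y0, L y0 = c
  · obtain ⟨y0, hy0⟩ := hne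
    have hk : LinearMap.ker L ≠ ⊤ := by
      intro H
      apply hd
      have h1 : L d = 0 := by
        have : d ∈ LinearMap.ker L := H ▸ Submodule.mem_top
        exact this
      rw [hL, Finset.sum_eq_zero_iff_of_nonneg (fun j _ => mul_self_nonneg _)] at h1
      funext j
      exact mul_self_eq_zero.1 (h1 j (Finset.mem_univ _))
    have h0 := Measure.addHaar_submodule (volume : Measure (Fin k → ℝ)) _ hk
    have h1 := measure_preimage_add_right (volume : Measure (Fin k → ℝ)) (-y0) (LinearMap.ker L)
    rw [h0] at h1
    rw [ae_iff]
    convert h1 using 2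
    ext y
    simp only [not_not, mem_ofPred_eq, mem_preimage, SetLike.mem_coe, LinearMap.mem_ker, map_add,
      map_neg, hy0, ← hL]
    constructor <;> intro H <;> linarith
  · push Not at hne
    exact Eventually.of_forall hne

/-- If the first coordinates are distinct, ties occur only on finitely many hyperplanes. -/
theorem ae_injective {A : Fin (k + 1) → ι → ℝ} (ha : Function.Injective (A 0)) (h : ι → ℝ) :
    ∀ᵐ y, Function.Injective (h - comb A y) := by
  have h1 : ∀ i j, i ≠ j → ∀ᵐ y : Fin (k + 1) → ℝ, ∑ p, y p * (A p i - A p j) ≠ h i - h j := by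
    intro i j hij
    refine hyperplane_null (fun H => hij (ha ?_)) _
    have := congrFun H 0
    simpa [sub_eq_zero] using this
  have h2 : ∀ᵐ y : Fin (k + 1) → ℝ, ∀ i j, i ≠ j → ∑ p, y p * (A p i - A p j) ≠ h i - h j := by
    rw [ae_all_iff]; intro i
    rw [ae_all_iff]; intro j
    rw [eventually_imp_distrib_left]
    exact h1 i j
  filter_upwards [h2] with y hy i j hij
  by_contra hne
  apply hy i j hne
  simp only [Pi.sub_apply, comb] at hij
  simp only [mul_sub, Finset.sum_sub_distrib]
  linarith

/-- Off a countable set of heights the slice has no ties almost everywhere; the exceptional set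
is empty when the slice has positive dimension. -/
theorem exists_ties {A : Fin (k + 1) → ι → ℝ} {h : ι → ℝ} (hG : Good A h) :
    ∃ S : Set ℝ, S.Countable ∧ (k ≠ 0 → S = ∅) ∧ ∀ z ∉ S, ∀ᵐ y : Fin k → ℝ,
      Function.Injective (h - z • A 0 - comb (Fin.tail A) y) := by
  obtain ⟨ha, -, hae⟩ := hG
  cases k with
  | zero =>
    refine ⟨range fun p : ι × ι => zc (A 0) p.1 p.2 h, (finite_range _).countable, fun H => absurd rfl H, ?_⟩
    intro z hz
    refine Eventually.of_forall fun y i j hij => ?_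
    by_contra hne
    refine hz ⟨(i, j), ?_⟩
    have h1 : A 0 j - A 0 i ≠ 0 := sub_ne_zero.2 fun e => hne (ha e.symm)
    simp only [comb, Finset.univ_eq_empty, Finset.sum_empty, Pi.sub_apply, Pi.smul_apply,
      smul_eq_mul, sub_zero] at hij
    simp only [zc]
    rw [div_eq_iff h1]; linarith
  | succ k =>
    refine ⟨∅, countable_empty, fun _ => rfl, fun z _ => ae_injective ?_ _⟩
    obtain ⟨z, hz⟩ := hae.exists
    exact hz.1

theorem eventually_lt_of_argmin {g : ι → ℝ} {i : ι} (H : ∀ j, j ≠ i → g i < g j) :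
    ∀ᶠ g' in 𝓝 g, ∀ j, j ≠ i → g' i < g' j := by
  rw [eventually_all]; intro j
  rw [eventually_imp_distrib_left]; intro hj
  exact (continuous_apply i).continuousAt.eventually_lt (continuous_apply j).continuousAt (H j hj)

theorem continuousAt_nu {g : ι → ℝ} (hg : Function.Injective g) (i : ι) : ContinuousAt (nu i) g := by
  obtain ⟨i0, hi0⟩ := exists_argmin_of_inj hg
  have hev := eventually_lt_of_argmin hi0
  rcases eq_or_ne i i0 with rfl | hne
  · have : (fun g' : ι → ℝ => Real.exp (g' i)) =ᶠ[𝓝 g] nu i := by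
      filter_upwards [hev] with g' hg'
      rw [nu_of_lt hg']
    exact ContinuousAt.congr (Continuous.continuousAt (by fun_prop)) this
  · have : (fun _ : ι → ℝ => (0 : ℝ)) =ᶠ[𝓝 g] nu i := by
      filter_upwards [hev] with g' hg'
      rw [nu_eq_zero hne.symm (hg' i hne).le]
    exact ContinuousAt.congr (by fun_prop) this

theorem sum_N {A : Fin k → ι → ℝ} (hA : Coer A) {h : ι → ℝ}
    (hinj : ∀ᵐ y, Function.Injective (h - comb A y)) : ∑ i, N A h i = Z A h := by
  unfold N Z
  rw [← integral_finsetSum _ fun i _ => integrable_nu hA h i]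
  refine integral_congr_ae ?_
  filter_upwards [hinj] with y hy
  exact sum_nu_of_inj hy

theorem N_nonneg (A : Fin k → ι → ℝ) (h : ι → ℝ) (i : ι) : 0 ≤ N A h i :=
  integral_nonneg fun _ => nu_nonneg _ _

theorem Z_pos {A : Fin k → ι → ℝ} (hA : Coer A) (h : ι → ℝ) : 0 < Z A h :=
  integral_exp_pos (integrable_exp_mn hA h)

theorem Good.ae_inj {A : Fin k → ι → ℝ} {h : ι → ℝ} (hG : Good A h) :
    ∀ᵐ y, Function.Injective (h - comb A y) := by
  cases k with
  | zero => 
    refine Eventually.of_forall fun y => ?_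
    have : comb A y = 0 := by ext; simp [comb]
    rw [this, sub_zero]; exact hG
  | succ k => exact ae_injective hG.1 h

theorem sum_nu_le (h : ι → ℝ) : ∑ i, nu i h ≤ Real.exp (mn h) := by
  classical
  by_cases H : ∃ i, ∀ j, j ≠ i → h i < h j
  · obtain ⟨i, hi⟩ := H
    rw [Finset.sum_eq_single i]
    · exact nu_le i h
    · intro j _ hj
      exact nu_eq_zero hj.symm (hi j hj).le
    · simp
  · push Not at H
    rw [Finset.sum_eq_zero]
    · positivity
    · intro i _
      obtain ⟨j, hj, hij⟩ := H i
      exact nu_eq_zero hj hij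

theorem sum_N_le {A : Fin k → ι → ℝ} (hA : Coer A) (h : ι → ℝ) : ∑ i, N A h i ≤ Z A h := by
  unfold N Z
  rw [← integral_finsetSum _ fun i _ => integrable_nu hA h i]
  exact integral_mono (integrable_finsetSum _ fun i _ => integrable_nu hA h i)
    (integrable_exp_mn hA h) fun y => sum_nu_le _

theorem continuousAt_N {A : Fin (k + 1) → ι → ℝ} (hA : Coer A) {h : ι → ℝ} {z : ℝ}
    (hz : ∀ᵐ y : Fin k → ℝ, Function.Injective (h - z • A 0 - comb (Fin.tail A) y)) (i : ι) :
    ContinuousAt (fun z : ℝ => N (Fin.tail A) (h - z • A 0) i) z := by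
  obtain ⟨ε, hε, H⟩ := hA
  have hc := continuous_comb (Fin.tail A)
  unfold N
  refine continuousAt_of_dominated (bound := fun y => Real.exp (‖h‖ - ε * ‖y‖))
    (Eventually.of_forall fun z => ((measurable_nu i).comp (by fun_prop)).aestronglyMeasurable)
    (Eventually.of_forall fun z => Eventually.of_forall fun y => ?_)
    (integrable_exp_neg_norm volume hε _) ?_
  · rw [Real.norm_eq_abs, abs_of_nonneg (nu_nonneg _ _)]
    refine (nu_le _ _).trans (Real.exp_le_exp.2 ((mn_sub_comb_le' H h z y).trans ?_))
    gcongr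
    exact le_max_right _ _
  · filter_upwards [hz] with y hy
    exact ContinuousAt.comp (f := fun z : ℝ => h - z • A 0 - comb (Fin.tail A) y)
      (continuousAt_nu hy i) (by fun_prop)

theorem abs_mn_sub_le (h g : ι → ℝ) : |mn h - mn g| ≤ ‖h - g‖ := by
  have h1 := mn_add_le (h - g) g
  have h2 := le_mn_add (h - g) g
  rw [sub_add_cancel] at h1 h2
  rw [abs_le]; constructor <;> linarith

theorem abs_exp_sub_le {s t c : ℝ} (hs : s ≤ c) (ht : t ≤ c) :
    |Real.exp s - Real.exp t| ≤ Real.exp c * |s - t| := by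
  wlog hst : t ≤ s generalizing s t
  · rw [abs_sub_comm, abs_sub_comm s]
    exact this ht hs (not_le.1 hst).le
  rw [abs_of_nonneg (sub_nonneg.2 (Real.exp_le_exp.2 hst)), abs_of_nonneg (sub_nonneg.2 hst)]
  have h1 := Real.add_one_le_exp (t - s)
  have h2 : Real.exp t = Real.exp s * Real.exp (t - s) := by rw [← Real.exp_add]; ring_nf
  have h3 := Real.exp_le_exp.2 hs
  have h4 := Real.exp_pos s
  rw [h2]
  nlinarith

/-- Derivative of the slice masses, by differentiation under the integral: almost everywhere the
integrand is locally the exponential of an affine function of `z`. -/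
theorem hasDerivAt_Z {A : Fin (k + 1) → ι → ℝ} (hA : Coer A) {h : ι → ℝ} {z : ℝ}
    (hz : ∀ᵐ y : Fin k → ℝ, Function.Injective (h - z • A 0 - comb (Fin.tail A) y)) :
    HasDerivAt (fun z : ℝ => Z (Fin.tail A) (h - z • A 0))
      (-∑ i, A 0 i * N (Fin.tail A) (h - z • A 0) i) z := by
  have hA' := hA
  obtain ⟨ε, hε, H⟩ := hA
  have hc := continuous_comb (Fin.tail A)
  have hm := continuous_mn (ι := ι)
  have e : -∑ i, A 0 i * N (Fin.tail A) (h - z • A 0) i =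
      ∫ y, -∑ i, A 0 i * nu i (h - z • A 0 - comb (Fin.tail A) y) := by
    rw [integral_neg, integral_finsetSum _ fun i _ => (integrable_nu hA'.tail _ i).const_mul _]
    simp only [integral_const_mul]; rfl
  have hle : ∀ (z : ℝ) (y : Fin k → ℝ), mn (h - z • A 0 - comb (Fin.tail A) y) ≤ ‖h‖ - ε * ‖y‖ := by
    intro z y
    refine (mn_sub_comb_le' H h z y).trans ?_
    gcongr
    exact le_max_right _ _
  rw [e]
  unfold Z
  refine (hasDerivAt_integral_of_dominated_loc_of_lip
    (F := fun (z : ℝ) y => Real.exp (mn (h - z • A 0 - comb (Fin.tail A) y)))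
    (bound := fun y => Real.exp (‖h‖ - ε * ‖y‖) * ‖A 0‖) (s := univ) univ_mem
    (Eventually.of_forall fun z => by fun_prop) (integrable_exp_mn hA'.tail _) ?_ ?_
    ((integrable_exp_neg_norm volume hε _).mul_const _) ?_).2
  · refine Measurable.aestronglyMeasurable (Measurable.neg ?_)
    exact Finset.measurable_fun_sum _ fun i _ =>
      Measurable.const_mul ((measurable_nu i).comp (by fun_prop)) _
  · refine Eventually.of_forall fun y => ?_
    refine LipschitzOnWith.of_dist_le_mul fun z1 _ z2 _ => ?_
    rw [Real.dist_eq, Real.dist_eq]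
    refine (abs_exp_sub_le (hle z1 y) (hle z2 y)).trans ?_
    have h1 := abs_mn_sub_le (h - z1 • A 0 - comb (Fin.tail A) y) (h - z2 • A 0 - comb (Fin.tail A) y)
    have h2 : h - z1 • A 0 - comb (Fin.tail A) y - (h - z2 • A 0 - comb (Fin.tail A) y)
        = (z2 - z1) • A 0 := by
      rw [sub_smul]; abel
    rw [h2, norm_smul, Real.norm_eq_abs, abs_sub_comm z2] at h1
    simp only [Real.coe_nnabs]
    have h3 : 0 ≤ Real.exp (‖h‖ - ε * ‖y‖) * ‖A 0‖ := by positivity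
    rw [abs_of_nonneg h3, mul_assoc]
    refine mul_le_mul_of_nonneg_left (h1.trans_eq (mul_comm _ _)) (Real.exp_pos _).le
  · filter_upwards [hz] with y hy
    obtain ⟨i, hi⟩ := exists_argmin_of_inj hy
    have hi' : ∀ g : ι → ℝ, (∀ j, j ≠ i → g i < g j) → mn g = g i := by
      intro g hg
      refine mn_eq fun j => ?_
      rcases eq_or_ne j i with rfl | hj
      · rfl
      · exact (hg j hj).le
    have hsum : -∑ j, A 0 j * nu j (h - z • A 0 - comb (Fin.tail A) y)
        = Real.exp (h i - z * A 0 i - comb (Fin.tail A) y i) * (0 - 1 * A 0 i - 0) := by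
      rw [Finset.sum_eq_single i]
      · rw [nu_of_lt hi]; simp only [Pi.sub_apply, Pi.smul_apply, smul_eq_mul]; ring
      · intro j _ hj
        rw [nu_eq_zero hj.symm (hi j hj).le, mul_zero]
      · simp
    rw [hsum]
    have hd : HasDerivAt (fun z : ℝ => Real.exp (h i - z * A 0 i - comb (Fin.tail A) y i))
        (Real.exp (h i - z * A 0 i - comb (Fin.tail A) y i) * (0 - 1 * A 0 i - 0)) z :=
      ((((hasDerivAt_const z (h i)).sub ((hasDerivAt_id z).mul_const (A 0 i)))).sub
        (hasDerivAt_const z _)).exp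
    refine hd.congr_of_eventuallyEq ?_
    have hcont : ContinuousAt (fun z : ℝ => h - z • A 0 - comb (Fin.tail A) y) z := by fun_prop
    filter_upwards [hcont.eventually (eventually_lt_of_argmin hi)] with z' hz'
    rw [hi' _ hz']
    rfl

theorem continuous_Z {A : Fin (k + 1) → ι → ℝ} (hA : Coer A) (h : ι → ℝ) :
    Continuous (fun z : ℝ => Z (Fin.tail A) (h - z • A 0)) := by
  obtain ⟨ε, hε, H⟩ := hA
  have hc := continuous_comb (Fin.tail A)
  have hm := continuous_mn (ι := ι)
  unfold Z
  refine continuous_of_dominated (bound := fun y => Real.exp (‖h‖ - ε * ‖y‖))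
    (fun z => by fun_prop) (fun z => Eventually.of_forall fun y => ?_)
    (integrable_exp_neg_norm volume hε _) (Eventually.of_forall fun y => by fun_prop)
  rw [Real.norm_eq_abs, abs_of_nonneg (Real.exp_pos _).le]
  refine (Real.exp_le_exp.2 ((mn_sub_comb_le' H h z y).trans ?_))
  gcongr
  exact le_max_right _ _

theorem integrable_Z {A : Fin (k + 1) → ι → ℝ} (hA : Coer A) (h : ι → ℝ) :
    Integrable (fun z : ℝ => Z (Fin.tail A) (h - z • A 0)) :=
  (integrable_exp_mn_prod hA h).integral_prod_left

theorem measurable_N {A : Fin (k + 1) → ι → ℝ} (h : ι → ℝ) (i : ι) :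
    Measurable (fun z : ℝ => N (Fin.tail A) (h - z • A 0) i) := by
  have hc := continuous_comb (Fin.tail A)
  refine StronglyMeasurable.measurable ?_
  unfold N
  refine StronglyMeasurable.integral_prod_right
    (f := fun z y => nu i (h - z • A 0 - comb (Fin.tail A) y)) ?_
  exact ((measurable_nu i).comp (by fun_prop)).stronglyMeasurable

end

/-! ### Tail bounds for the slice masses -/

section

variable {ι : Type*} [Fintype ι] [Nonempty ι] {k : ℕ}

theorem Coer.neg_head {A : Fin (k + 1) → ι → ℝ} (hA : Coer A) :
    Coer (Fin.cons (-A 0) (Fin.tail A) : Fin (k + 1) → ι → ℝ) := by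
  obtain ⟨ε, hε, H⟩ := hA
  refine ⟨ε, hε, fun y => ?_⟩
  obtain ⟨i, hi⟩ := H (Fin.cons (-y 0) (Fin.tail y))
  refine ⟨i, ?_⟩
  rw [comb_cons, norm_cons] at hi
  rw [← Fin.cons_self_tail y, comb_cons, norm_cons]
  simpa [Prod.norm_def] using hi

/-- Decay of the slice masses for `h = 0`. The potential is then homogeneous of degree one, so
rescaling a slice maps it to a farther one; the factor `(1 + τ) ^ k` is a bound for the Jacobian. -/
theorem Z_scale {A : Fin (k + 1) → ι → ℝ} {ε : ℝ} (hε : 0 < ε)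
    (H : ∀ y, ∃ i, ε * ‖y‖ ≤ comb A y i) {z τ : ℝ} (hz : 1 ≤ z) (hτ : 0 ≤ τ) :
    Z (Fin.tail A) (0 - (z + τ) • A 0) ≤
      (1 + τ) ^ k * Real.exp (-(ε * τ)) * Z (Fin.tail A) (0 - z • A 0) := by
  have hA : Coer A := ⟨ε, hε, H⟩
  set r := (z + τ) / z with hr
  have hz0 : 0 < z := by linarith
  have hr0 : 0 < r := by positivity
  have hr1 : r ≤ 1 + τ := by
    rw [hr, div_le_iff₀ hz0]; nlinarith
  have hrz : r * z = z + τ := by rw [hr]; field_simp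
  have h1 := Measure.integral_comp_smul (volume : Measure (Fin k → ℝ))
    (fun y => Real.exp (mn (0 - (z + τ) • A 0 - comb (Fin.tail A) y))) r
  have h2 : Z (Fin.tail A) (0 - (z + τ) • A 0) = r ^ k *
      ∫ y : Fin k → ℝ, Real.exp (mn (0 - (z + τ) • A 0 - comb (Fin.tail A) (r • y))) := by
    rw [h1, Module.finrank_fin_fun, smul_eq_mul, abs_of_pos (by positivity), ← mul_assoc,
      mul_inv_cancel₀ (by positivity), one_mul]
    rfl
  have h3 : ∀ y, mn (0 - (z + τ) • A 0 - comb (Fin.tail A) (r • y)) ≤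
      -(ε * τ) + mn (0 - z • A 0 - comb (Fin.tail A) y) := by
    intro y
    have e : 0 - (z + τ) • A 0 - comb (Fin.tail A) (r • y) =
        r • (0 - z • A 0 - comb (Fin.tail A) y) := by
      rw [comb_smul, smul_sub, smul_sub, smul_smul, hrz, smul_zero]
    rw [e, mn_smul hr0.le]
    have h4 := mn_sub_comb_le' H 0 z y
    have h5 : z ≤ ‖(z, y)‖ := (le_abs_self z).trans (le_max_left _ _)
    rw [norm_zero] at h4
    set m := mn (0 - z • A 0 - comb (Fin.tail A) y)
    have h6 : m ≤ -(ε * z) := by nlinarith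
    have h7 : r - 1 = τ / z := by rw [hr]; field_simp; ring
    have h8 : (r - 1) * m ≤ (r - 1) * (-(ε * z)) :=
      mul_le_mul_of_nonneg_left h6 (by rw [h7]; positivity)
    have h9 : (r - 1) * (-(ε * z)) = -(ε * τ) := by rw [h7]; field_simp
    linarith
  rw [h2, mul_assoc]
  refine mul_le_mul (pow_le_pow_left₀ hr0.le hr1 k) ?_
    (integral_nonneg fun y => (Real.exp_pos _).le) (by positivity)
  unfold Z
  rw [← integral_const_mul]
  refine integral_mono_of_nonneg (Eventually.of_forall fun y => (Real.exp_pos _).le)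
    ((integrable_exp_mn hA.tail _).const_mul _) (Eventually.of_forall fun y => ?_)
  simp only
  rw [← Real.exp_add]
  exact Real.exp_le_exp.2 (h3 y)

/-- A bounded perturbation of `h` changes the mass by a bounded factor. -/
theorem Z_le {A : Fin k → ι → ℝ} (hA : Coer A) (h g : ι → ℝ) :
    Z A (h + g) ≤ Real.exp ‖h‖ * Z A g := by
  unfold Z
  rw [← integral_const_mul]
  refine integral_mono (integrable_exp_mn hA _) ((integrable_exp_mn hA _).const_mul _) fun y => ?_
  simp only
  rw [← Real.exp_add, add_sub_assoc]
  exact Real.exp_le_exp.2 (mn_add_le _ _)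

/-- The mass beyond height `z` is controlled by the mass of the slice at `z`. By `Z_le` it suffices to
have exponential decay for `h = 0`. -/
theorem tail_bound {A : Fin (k + 1) → ι → ℝ} (hA : Coer A) (h : ι → ℝ) :
    ∃ C, ∀ z : ℝ, 1 ≤ z → ∫ t in Ioi z, Z (Fin.tail A) (h - t • A 0) ≤
      C * Z (Fin.tail A) (h - z • A 0) := by
  have hA' := hA
  obtain ⟨ε, hε, H⟩ := hA
  set M := Real.exp ‖h‖ * Real.exp ‖h‖ * (k.factorial * (2 / ε) ^ k * Real.exp (ε / 2)) with hM
  have hpt : ∀ z t : ℝ, 1 ≤ z → z < t → Z (Fin.tail A) (h - t • A 0) ≤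
      M * Z (Fin.tail A) (h - z • A 0) * Real.exp (ε / 2 * z) * Real.exp (-(ε / 2) * t) := by
    intro z t hz ht
    have h1 : Z (Fin.tail A) (h - t • A 0) ≤ Real.exp ‖h‖ * Z (Fin.tail A) (0 - t • A 0) := by
      have := Z_le hA'.tail h (0 - t • A 0)
      rwa [zero_sub, ← sub_eq_add_neg, ← zero_sub] at this
    have h2 : Z (Fin.tail A) (0 - z • A 0) ≤ Real.exp ‖h‖ * Z (Fin.tail A) (h - z • A 0) := by
      have := Z_le hA'.tail (-h) (h - z • A 0)
      rwa [norm_neg, ← add_sub_assoc, neg_add_cancel] at this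
    have h3 := Z_scale hε H hz (τ := t - z) (by linarith)
    rw [add_sub_cancel] at h3
    have h4 : (1 + (t - z)) ^ k ≤ k.factorial * (2 / ε) ^ k * Real.exp (ε / 2 * (1 + (t - z))) := by
      have := Real.pow_div_factorial_le_exp (ε / 2 * (1 + (t - z)))
        (mul_nonneg (by positivity) (by linarith)) k
      rw [div_le_iff₀ (by positivity), mul_pow] at this
      have e : (1 + (t - z)) ^ k = (2 / ε) ^ k * ((ε / 2) ^ k * (1 + (t - z)) ^ k) := by
        rw [← mul_assoc, ← mul_pow]
        have : 2 / ε * (ε / 2) = 1 := by field_simp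
        rw [this, one_pow, one_mul]
      rw [e]
      calc _ ≤ (2 / ε) ^ k * (Real.exp (ε / 2 * (1 + (t - z))) * k.factorial) := by gcongr
        _ = _ := by ring
    have hZ0 := (Z_pos hA'.tail (h - z • A 0)).le
    have hZ1 := (Z_pos hA'.tail (0 - z • A 0)).le
    calc Z (Fin.tail A) (h - t • A 0) ≤ Real.exp ‖h‖ * Z (Fin.tail A) (0 - t • A 0) := h1
      _ ≤ Real.exp ‖h‖ * ((1 + (t - z)) ^ k * Real.exp (-(ε * (t - z))) *
          Z (Fin.tail A) (0 - z • A 0)) := by gcongr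
      _ ≤ Real.exp ‖h‖ * ((k.factorial * (2 / ε) ^ k * Real.exp (ε / 2 * (1 + (t - z)))) *
          Real.exp (-(ε * (t - z))) * (Real.exp ‖h‖ * Z (Fin.tail A) (h - z • A 0))) := by gcongr
      _ = _ := by
        have e : Real.exp (ε / 2 * (1 + (t - z))) * Real.exp (-(ε * (t - z))) =
            Real.exp (ε / 2) * Real.exp (ε / 2 * z) * Real.exp (-(ε / 2) * t) := by
          simp only [← Real.exp_add]; ring_nf
        rw [hM]
        linear_combination (Real.exp ‖h‖ * Real.exp ‖h‖ * (k.factorial * (2 / ε) ^ k) *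
          Z (Fin.tail A) (h - z • A 0)) * e
  refine ⟨M * (2 / ε), fun z hz => ?_⟩
  have hneg : -(ε / 2) < 0 := by linarith
  calc ∫ t in Ioi z, Z (Fin.tail A) (h - t • A 0) ≤ ∫ t in Ioi z,
        M * Z (Fin.tail A) (h - z • A 0) * Real.exp (ε / 2 * z) * Real.exp (-(ε / 2) * t) := by
        refine setIntegral_mono_on (integrable_Z hA' h).integrableOn
          ((integrableOn_exp_mul_Ioi hneg z).const_mul _) measurableSet_Ioi fun t ht => hpt z t hz ht
    _ = _ := by
        rw [integral_const_mul, integral_exp_mul_Ioi hneg]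
        have : Real.exp (ε / 2 * z) * Real.exp (-(ε / 2) * z) = 1 := by
          rw [← Real.exp_add]; ring_nf; simp
        rw [neg_div_neg_eq]
        have e2 : Real.exp (-(ε / 2) * z) / (ε / 2) = Real.exp (-(ε / 2) * z) * (2 / ε) := by
          field_simp
        rw [e2]
        linear_combination (M * Z (Fin.tail A) (h - z • A 0) * (2 / ε)) * this

/-- A primitive of a function dominated by the slice mass is again dominated by it, provided the total
integral vanishes: `tail_bound` is applied at either end, and
compactness settles the heights in `[-1, 1]`. -/
theorem primitive_bound {A : Fin (k + 1) → ι → ℝ} (hA : Coer A) (h : ι → ℝ) {g : ℝ → ℝ} {M : ℝ}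
    (hg : Integrable g) (hg0 : ∫ z, g z = 0)
    (hM : ∀ z, |g z| ≤ M * Z (Fin.tail A) (h - z • A 0)) :
    ∃ K, ∀ z, |∫ t in Iic z, g t| ≤ K * Z (Fin.tail A) (h - z • A 0) := by
  obtain ⟨C1, hC1⟩ := tail_bound hA h
  obtain ⟨C2, hC2⟩ := tail_bound hA.neg_head h
  simp only [Fin.tail_cons, Fin.cons_zero, smul_neg, ← neg_smul] at hC2
  have hZ := fun z : ℝ => Z_pos hA.tail (h - z • A 0)
  have hM0 : 0 ≤ M := by
    have := (abs_nonneg _).trans (hM 0)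
    exact nonneg_of_mul_nonneg_left this (hZ 0)
  have hintg := integrable_Z hA h
  obtain ⟨z0, -, hz0⟩ := isCompact_Icc.exists_isMinOn (nonempty_Icc.2 (by norm_num : (-1:ℝ) ≤ 1))
    (continuous_Z hA h).continuousOn
  set m := Z (Fin.tail A) (h - z0 • A 0)
  set B := ∫ t, |g t|
  have hB : 0 ≤ B := integral_nonneg fun _ => abs_nonneg _
  refine ⟨max (M * C1) (max (M * C2) (B / m)), fun z => ?_⟩
  rcases le_or_gt 1 z with hz | hz
  · have h1 : ∫ t in Iic z, g t = - ∫ t in Ioi z, g t := by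
      have := integral_add_compl (measurableSet_Iic (a := z)) hg
      rw [compl_Iic, hg0] at this
      linarith
    rw [h1, abs_neg]
    calc |∫ t in Ioi z, g t| ≤ ∫ t in Ioi z, |g t| := abs_integral_le_integral_abs
      _ ≤ ∫ t in Ioi z, M * Z (Fin.tail A) (h - t • A 0) :=
        setIntegral_mono hg.abs.integrableOn (hintg.const_mul M).integrableOn hM
      _ ≤ M * (C1 * Z (Fin.tail A) (h - z • A 0)) := by
        rw [integral_const_mul]; exact mul_le_mul_of_nonneg_left (hC1 z hz) hM0
      _ ≤ _ := by
        rw [← mul_assoc]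
        exact mul_le_mul_of_nonneg_right (le_max_left _ _) (hZ z).le
  rcases le_or_gt z (-1) with hz' | hz'
  · calc |∫ t in Iic z, g t| ≤ ∫ t in Iic z, |g t| := abs_integral_le_integral_abs
      _ ≤ ∫ t in Iic z, M * Z (Fin.tail A) (h - t • A 0) :=
        setIntegral_mono hg.abs.integrableOn (hintg.const_mul M).integrableOn hM
      _ ≤ M * (C2 * Z (Fin.tail A) (h - z • A 0)) := by
        rw [integral_const_mul]
        refine mul_le_mul_of_nonneg_left ?_ hM0
        have := hC2 (-z) (by linarith)
        rw [neg_neg, integral_comp_neg_Ioi (f := fun t : ℝ => Z (Fin.tail A) (h - t • A 0))] at this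
        rwa [neg_neg] at this
      _ ≤ _ := by
        rw [← mul_assoc]
        exact mul_le_mul_of_nonneg_right ((le_max_left _ _).trans (le_max_right _ _)) (hZ z).le
  · calc |∫ t in Iic z, g t| ≤ ∫ t in Iic z, |g t| := abs_integral_le_integral_abs
      _ ≤ B := setIntegral_le_integral hg.abs (Eventually.of_forall fun _ => abs_nonneg _)
      _ = B / m * m := (div_mul_cancel₀ B (hZ z0).ne').symm
      _ ≤ B / m * Z (Fin.tail A) (h - z • A 0) := by
        have h1 : m ≤ Z (Fin.tail A) (h - z • A 0) := hz0 ⟨hz'.le, hz.le⟩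
        exact mul_le_mul_of_nonneg_left h1 (div_nonneg hB (hZ z0).le)
      _ ≤ _ := mul_le_mul_of_nonneg_right ((le_max_right _ _).trans (le_max_right _ _)) (hZ z).le

end

/-! ### The corrector and the slice inequality -/

section

variable {ι : Type*} [Fintype ι] [Nonempty ι] {k : ℕ}

theorem abs_sum_N_mul_le {A : Fin k → ι → ℝ} (hA : Coer A) (h : ι → ℝ) {f : ι → ℝ} {K : ℝ}
    (hK : ∀ i, |f i| ≤ K) : |∑ i, N A h i * f i| ≤ K * Z A h := by
  have hK0 : 0 ≤ K := (abs_nonneg _).trans (hK (Classical.arbitrary ι))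
  calc |∑ i, N A h i * f i| ≤ ∑ i, |N A h i * f i| := Finset.abs_sum_le_sum_abs _ _
    _ ≤ ∑ i, K * N A h i := by
      refine Finset.sum_le_sum fun i _ => ?_
      rw [abs_mul, abs_of_nonneg (N_nonneg _ _ _), mul_comm]
      exact mul_le_mul_of_nonneg_right (hK i) (N_nonneg _ _ _)
    _ ≤ _ := by
      rw [← Finset.mul_sum]
      exact mul_le_mul_of_nonneg_left (sum_N_le hA h) hK0

/-- The corrector `u` is `W / ρ`, where `W` is the primitive of `∑ n i x i` vanishing at `-∞` and `ρ`
is the slice mass. As `ρ' = -∑ a i n i`, it solves `u' ρ = ∑ n i (x i + u a i)`, and it is bounded by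
`primitive_bound`. `S` holds the heights
of the tied slices, which occur only when slices are points; there `ρ` need not be differentiable. -/
theorem exists_corrector {A : Fin (k + 1) → ι → ℝ} {h : ι → ℝ} (hA : Coer A) (hG : Good A h)
    {x : ι → ℝ} (hx : ∑ i, N A h i * x i = 0) :
    ∃ (u u' : ℝ → ℝ) (S : Set ℝ) (K : ℝ), S.Countable ∧ Continuous u ∧
      (∀ z ∉ S, HasDerivAt u (u' z) z) ∧ Measurable u' ∧ (∀ z, |u z| ≤ K) ∧ (∀ z, |u' z| ≤ K) ∧
      ∀ z, ∑ i, N (Fin.tail A) (h - z • A 0) i * (x i + u z * A 0 i) =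
        u' z * Z (Fin.tail A) (h - z • A 0) := by
  obtain ⟨S, hS, -, hinj⟩ := exists_ties hG
  set ρ : ℝ → ℝ := fun z => Z (Fin.tail A) (h - z • A 0) with hρ
  set n : ℝ → ι → ℝ := fun z => N (Fin.tail A) (h - z • A 0) with hn
  have hρ0 : ∀ z, 0 < ρ z := fun z => Z_pos hA.tail _
  set g : ℝ → ℝ := fun z => ∑ i, n z i * x i with hg
  have hni : ∀ i, Integrable (fun z => n z i) := fun i => by
    have := integrable_mul_N hA h i (f := fun _ => (1 : ℝ)) measurable_const (K := 1) (by simp)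
    simpa using this
  have hgi : Integrable g := integrable_finsetSum _ fun i _ => (hni i).mul_const _
  have hg0 : ∫ z, g z = 0 := by
    rw [hg, integral_finsetSum _ fun i _ => (hni i).mul_const _]
    simp only [integral_mul_const]
    rw [← hx]
    simp only [N_succ hA]; rfl
  obtain ⟨M, hM⟩ : ∃ M, ∀ i, |x i| ≤ M := ⟨‖x‖, fun i => norm_le_pi_norm x i⟩
  obtain ⟨K, hK⟩ := primitive_bound hA h hgi hg0 (M := M) fun z => abs_sum_N_mul_le hA.tail _ hM
  set W : ℝ → ℝ := fun z => ∫ t in Iic z, g t with hW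
  have hWeq : ∀ z, W z = W 0 + ∫ t in (0:ℝ)..z, g t := fun z => by
    rw [← intervalIntegral.integral_Iic_sub_Iic hgi.integrableOn hgi.integrableOn]
    ring
  have hWc : Continuous W := by
    rw [funext hWeq]
    exact continuous_const.add (intervalIntegral.continuous_primitive
      (fun a b => hgi.intervalIntegrable) 0)
  have hWd : ∀ z ∉ S, HasDerivAt W (g z) z := fun z hz => by
    rw [funext hWeq]
    refine HasDerivAt.const_add _ (intervalIntegral.integral_hasDerivAt_right
      hgi.intervalIntegrable ?_ ?_)
    · exact hgi.aestronglyMeasurable.stronglyMeasurableAtFilter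
    · rw [hg]
      exact tendsto_finsetSum _ fun i _ => (continuousAt_N hA (hinj z hz) i).mul_const (x i)
  have hρd : ∀ z ∉ S, HasDerivAt ρ (-∑ i, A 0 i * n z i) z := fun z hz => hasDerivAt_Z hA (hinj z hz)
  set u : ℝ → ℝ := fun z => W z / ρ z with hu
  set u' : ℝ → ℝ := fun z => (∑ i, n z i * (x i + u z * A 0 i)) / ρ z with hu'
  have hρc : Continuous ρ := continuous_Z hA h
  have huc : Continuous u := hWc.div hρc fun z => (hρ0 z).ne'
  have huK : ∀ z, |u z| ≤ K := fun z => by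
    rw [hu, abs_div, abs_of_pos (hρ0 z), div_le_iff₀ (hρ0 z)]
    exact hK z
  have huK' : ∀ z, |u' z| ≤ M + K * ‖A 0‖ := fun z => by
    rw [hu', abs_div, abs_of_pos (hρ0 z), div_le_iff₀ (hρ0 z)]
    refine abs_sum_N_mul_le hA.tail _ fun i => ?_
    refine (abs_add_le _ _).trans (add_le_add (hM i) ?_)
    rw [abs_mul]
    exact mul_le_mul (huK z) (norm_le_pi_norm (A 0) i) (abs_nonneg _) ((abs_nonneg _).trans (huK z))
  refine ⟨u, u', S, max K (M + K * ‖A 0‖), hS, huc, fun z hz => ?_, ?_,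
    fun z => (huK z).trans (le_max_left _ _), fun z => (huK' z).trans (le_max_right _ _), fun z => ?_⟩
  · refine ((hWd z hz).div (hρd z hz) (hρ0 z).ne').congr_deriv ?_
    have h1 : ∑ i, n z i * (x i + u z * A 0 i) = g z + u z * ∑ i, A 0 i * n z i := by
      rw [hg, Finset.mul_sum, ← Finset.sum_add_distrib]
      refine Finset.sum_congr rfl fun i _ => by ring
    simp only [hu']
    rw [h1]
    simp only [hu]
    have := (hρ0 z).ne'
    field_simp
    ring
  · have := fun i => measurable_N (A := A) h i
    have := hρc.measurable
    have := huc.measurable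
    refine Measurable.div (Finset.measurable_fun_sum _ fun i _ => ?_) hρc.measurable
    exact (measurable_N h i).mul (measurable_const.add (huc.measurable.mul_const _))
  · exact Eq.symm (div_mul_cancel₀ _ (ne_of_gt (hρ0 z)))

/-- The quadratic form `½ ∑ w i j (x i - x j)² - ∑ N i (x i)²`. -/
def Dq (A : Fin k → ι → ℝ) (h : ι → ℝ) (x : ι → ℝ) : ℝ :=
  (∑ i, ∑ j, w A h i j * (x i - x j) ^ 2) / 2 - ∑ i, N A h i * x i ^ 2

/-- The form `Dq` with the contribution of the weighted mean removed: its value at `x` is that of `Dq`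
at `x` minus its mean. -/
def Q (A : Fin k → ι → ℝ) (h : ι → ℝ) (x : ι → ℝ) : ℝ :=
  Dq A h x + (∑ i, N A h i * x i) ^ 2 / Z A h

/-- Summation by parts for symmetric weights. -/
theorem sum_antisymm {U : ι → ι → ℝ} (hU : ∀ i j, U i j = U j i) (a x : ι → ℝ) :
    ∑ i, ∑ j, (a i - a j) * (x i - x j) * U i j = 2 * ∑ i, ∑ j, (a i - a j) * (x i * U i j) := by
  have h1 : ∑ i, ∑ j, (a i - a j) * (x j * U i j) = - ∑ i, ∑ j, (a i - a j) * (x i * U i j) := by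
    rw [Finset.sum_comm, ← Finset.sum_neg_distrib]
    refine Finset.sum_congr rfl fun i _ => ?_
    rw [← Finset.sum_neg_distrib]
    refine Finset.sum_congr rfl fun j _ => ?_
    rw [hU j i]; ring
  have h2 : ∑ i, ∑ j, (a i - a j) * (x i - x j) * U i j =
      ∑ i, ∑ j, (a i - a j) * (x i * U i j) - ∑ i, ∑ j, (a i - a j) * (x j * U i j) := by
    rw [← Finset.sum_sub_distrib]
    refine Finset.sum_congr rfl fun i _ => ?_
    rw [← Finset.sum_sub_distrib]
    exact Finset.sum_congr rfl fun j _ => by ring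
  rw [h2, h1]; ring

/-- The form is bounded below by an integral over slices. Expanding the interface terms of the slices at
`x + u a` yields those of `x` and cross terms, and the integration by parts `wf` with the functions
`2 u x i + u² a i` turns the latter into cell terms. The equation for `u` completes the square. -/
theorem slice_ineq {A : Fin (k + 1) → ι → ℝ} {h : ι → ℝ} (hA : Coer A) (hG : Good A h)
    {x : ι → ℝ} {u u' : ℝ → ℝ} {S : Set ℝ} {K : ℝ} (hS : S.Countable) (hu : Continuous u)
    (hd : ∀ z ∉ S, HasDerivAt u (u' z) z) (hm : Measurable u') (hK : ∀ z, |u z| ≤ K)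
    (hK' : ∀ z, |u' z| ≤ K)
    (hode : ∀ z, ∑ i, N (Fin.tail A) (h - z • A 0) i * (x i + u z * A 0 i) =
        u' z * Z (Fin.tail A) (h - z • A 0)) :
    Integrable (fun z => u' z ^ 2 * Z (Fin.tail A) (h - z • A 0)) ∧
    Integrable (fun z => Q (Fin.tail A) (h - z • A 0) (x + u z • A 0)) ∧
    (∫ z, u' z ^ 2 * Z (Fin.tail A) (h - z • A 0)) +
      ∫ z, Q (Fin.tail A) (h - z • A 0) (x + u z • A 0) ≤ Dq A h x := by
  set ρ : ℝ → ℝ := fun z => Z (Fin.tail A) (h - z • A 0) with hρ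
  set n : ℝ → ι → ℝ := fun z => N (Fin.tail A) (h - z • A 0) with hn
  set a := A 0 with ha
  have hK0 : 0 ≤ K := (abs_nonneg _).trans (hK 0)
  have hum := hu.measurable
  have hu2 : ∀ z, |u z ^ 2| ≤ K ^ 2 := fun z => by
    rw [abs_pow]; exact pow_le_pow_left₀ (abs_nonneg _) (hK z) 2
  have hu2' : ∀ z, |u' z ^ 2| ≤ K ^ 2 := fun z => by
    rw [abs_pow]; exact pow_le_pow_left₀ (abs_nonneg _) (hK' z) 2
  have hI1 : Integrable (fun z => u' z ^ 2 * ρ z) :=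
    (integrable_Z hA h).bdd_mul (c := K ^ 2) (hm.pow_const 2).aestronglyMeasurable
      (Eventually.of_forall hu2')
  have hi0 : ∀ i, Integrable (fun z => n z i) := fun i => by
    have := integrable_mul_N hA h i (f := fun _ => (1 : ℝ)) measurable_const (K := 1) (by simp)
    simpa using this
  have hi1 : ∀ i, Integrable (fun z => u z * n z i) := fun i => integrable_mul_N hA h i hum hK
  have hi2 : ∀ i, Integrable (fun z => u z ^ 2 * n z i) := fun i =>
    integrable_mul_N hA h i (hum.pow_const 2) hu2
  -- `wf` is applied to `φ i = 2 u x i + u² a i`; `U` and `V` are the interface integrals of `u`, `u²`.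
  obtain ⟨B, hB⟩ : ∃ B, ∀ i, |x i| ≤ B := ⟨‖x‖, fun i => norm_le_pi_norm x i⟩
  obtain ⟨B', hB'⟩ : ∃ B, ∀ i, |a i| ≤ B := ⟨‖a‖, fun i => norm_le_pi_norm a i⟩
  have hB0 : 0 ≤ B := (abs_nonneg _).trans (hB (Classical.arbitrary ι))
  have hB0' : 0 ≤ B' := (abs_nonneg _).trans (hB' (Classical.arbitrary ι))
  obtain ⟨ε, hε, H⟩ := id hA
  set U : ι → ι → ℝ := fun i j => Om A h i j u with hU
  set V : ι → ι → ℝ := fun i j => Om A h i j (fun z => u z ^ 2) with hV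
  have hOmφ : ∀ i j (p q r : ℝ), Om A h i j (fun z => p + q * u z + r * u z ^ 2) =
      p * w A h i j + q * U i j + r * V i j := by
    intro i j p q r
    have e0 := integrable_Om hε H h i j (φ := fun _ => (1:ℝ)) measurable_const (K := 1) (by simp)
    have e1 := integrable_Om hε H h i j hum hK
    have e2 := integrable_Om hε H h i j (hum.pow_const 2) hu2
    rw [w_eq_Om]
    simp only [Om, hU, hV]
    rw [← integral_const_mul, ← integral_const_mul, ← integral_const_mul,
      ← integral_add (e0.const_mul p) (e1.const_mul q), ← integral_add
      ((e0.const_mul p).fun_add (e1.const_mul q)) (e2.const_mul r)]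
    refine integral_congr_ae (Eventually.of_forall fun y => ?_)
    simp only
    ring
  have hwf : ∀ i, ∫ z, (2 * u' z * (x i + u z * a i)) * n z i =
      a i * (2 * x i * (∫ z, u z * n z i) + a i * ∫ z, u z ^ 2 * n z i) -
        ∑ j, (a i - a j) * (2 * x i * U i j + a i * V i j) := by
    intro i
    have hφ : ∀ z ∉ S, HasDerivAt (fun z => 0 + 2 * x i * u z + a i * u z ^ 2)
        (2 * u' z * (x i + u z * a i)) z := fun z hz => by
      have := (((hd z hz).const_mul (2 * x i)).const_add 0).add (((hd z hz).pow 2).const_mul (a i))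
      refine this.congr_deriv ?_
      simp; ring
    have hb : ∀ z, |x i + u z * a i| ≤ B + K * B' := fun z => by
      refine (abs_add_le _ _).trans (add_le_add (hB i) ?_)
      rw [abs_mul]
      exact mul_le_mul (hK z) (hB' i) (abs_nonneg _) hK0
    have := wf hA hG i (φ := fun z => 0 + 2 * x i * u z + a i * u z ^ 2)
      (φ' := fun z => 2 * u' z * (x i + u z * a i)) (K := 2 * K * (B + K * B')) hS
      (by fun_prop) hφ (by fun_prop) (fun z => ?_) (fun z => ?_)
    · rw [this, Finset.sum_congr rfl fun j _ => by rw [hOmφ, zero_mul, zero_add]]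
      congr 2
      rw [← integral_const_mul, ← integral_const_mul,
        ← integral_add ((hi1 i).const_mul _) ((hi2 i).const_mul _)]
      refine integral_congr_ae (Eventually.of_forall fun z => ?_)
      simp only [hn, ha]
      ring
    · have e : 0 + 2 * x i * u z + a i * u z ^ 2 = u z * (x i + (x i + u z * a i)) := by ring
      rw [e, abs_mul]
      calc |u z| * |x i + (x i + u z * a i)| ≤ K * (B + (B + K * B')) := by
            refine mul_le_mul (hK z) ((abs_add_le _ _).trans (add_le_add (hB i) (hb z)))
              (abs_nonneg _) hK0
        _ ≤ _ := by nlinarith [mul_nonneg hK0 (mul_nonneg hK0 hB0')]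
    · rw [abs_mul, abs_mul, abs_two]
      gcongr
      · exact hK' z
      · exact hb z
  have hwfs : 2 * ∫ z, u' z ^ 2 * ρ z = ∑ i, (a i * (2 * x i * (∫ z, u z * n z i) +
      a i * ∫ z, u z ^ 2 * n z i) - ∑ j, (a i - a j) * (2 * x i * U i j + a i * V i j)) := by
    rw [← Finset.sum_congr rfl fun i _ => hwf i, ← integral_finsetSum, ← integral_const_mul]
    · refine integral_congr_ae (Eventually.of_forall fun z => ?_)
      simp only
      have : 2 * (u' z ^ 2 * ρ z) = 2 * u' z * (u' z * ρ z) := by ring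
      rw [this, ← hode z, Finset.mul_sum]
      exact Finset.sum_congr rfl fun i _ => by simp only [hn]; ring
    · intro i _
      refine integrable_mul_N hA h i (by fun_prop) (K := 2 * K * (B + K * B')) fun z => ?_
      rw [abs_mul, abs_mul, abs_two]
      gcongr
      · exact hK' z
      · refine (abs_add_le _ _).trans (add_le_add (hB i) ?_)
        rw [abs_mul]
        exact mul_le_mul (hK z) (hB' i) (abs_nonneg _) hK0
  -- `Om_ge` for `(ξ i - ξ j)²`, `ξ = x + u a`, expanded in powers of `u`.
  have hwz : ∀ i j, Integrable (fun z => ((x + u z • a) i - (x + u z • a) j) ^ 2 *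
      w (Fin.tail A) (h - z • a) i j) ∧
      ∫ z, ((x + u z • a) i - (x + u z • a) j) ^ 2 * w (Fin.tail A) (h - z • a) i j ≤
      (x i - x j) ^ 2 * w A h i j + 2 * (x i - x j) * (a i - a j) * U i j +
        (a i - a j) ^ 2 * V i j := by
    intro i j
    have := Om_ge hA hG i j (φ := fun z => ((x + u z • a) i - (x + u z • a) j) ^ 2)
      (by simp only [Pi.add_apply, Pi.smul_apply, smul_eq_mul]; fun_prop)
      (K := (2 * (B + K * B')) ^ 2) (fun z => ?_) (fun z => sq_nonneg _)
    · refine ⟨this.1, this.2.trans (le_of_eq ?_)⟩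
      rw [← hOmφ]
      congr 1
      funext z
      simp only [Pi.add_apply, Pi.smul_apply, smul_eq_mul]
      ring
    · have hb : ∀ i, |(x + u z • a) i| ≤ B + K * B' := fun i => by
        simp only [Pi.add_apply, Pi.smul_apply, smul_eq_mul]
        refine (abs_add_le _ _).trans (add_le_add (hB i) ?_)
        rw [abs_mul]
        exact mul_le_mul (hK z) (hB' i) (abs_nonneg _) hK0
      rw [abs_pow]
      refine pow_le_pow_left₀ (abs_nonneg _) ?_ 2
      refine (abs_sub _ _).trans ?_
      linarith [hb i, hb j]
  have hNz : ∀ i, Integrable (fun z => n z i * (x + u z • a) i ^ 2) ∧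
      ∫ z, n z i * (x + u z • a) i ^ 2 = N A h i * x i ^ 2 +
        2 * x i * a i * (∫ z, u z * n z i) + a i ^ 2 * ∫ z, u z ^ 2 * n z i := by
    intro i
    have e : (fun z => n z i * (x + u z • a) i ^ 2) = fun z =>
        n z i * x i ^ 2 + 2 * x i * a i * (u z * n z i) + a i ^ 2 * (u z ^ 2 * n z i) := by
      funext z
      simp only [Pi.add_apply, Pi.smul_apply, smul_eq_mul]
      ring
    have j0 := (hi0 i).mul_const (x i ^ 2)
    have j1 := (hi1 i).const_mul (2 * x i * a i)
    have j2 := (hi2 i).const_mul (a i ^ 2)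
    rw [e]
    refine ⟨(j0.add j1).add j2, ?_⟩
    rw [integral_add (j0.fun_add j1) j2, integral_add j0 j1, integral_mul_const, integral_const_mul,
      integral_const_mul, N_succ hA]
  have hQ : (fun z => Q (Fin.tail A) (h - z • a) (x + u z • a)) = fun z =>
      ((∑ i, ∑ j, ((x + u z • a) i - (x + u z • a) j) ^ 2 * w (Fin.tail A) (h - z • a) i j) / 2 -
      ∑ i, n z i * (x + u z • a) i ^ 2) + u' z ^ 2 * ρ z := by
    funext z
    have := hode z
    have hz := (Z_pos hA.tail (h - z • a)).ne'
    unfold Q Dq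
    simp only [Pi.add_apply, Pi.smul_apply, smul_eq_mul] at this ⊢
    rw [this]
    congr 1
    · congr 2
      exact Finset.sum_congr rfl fun i _ => Finset.sum_congr rfl fun j _ => by ring
    · simp only [hρ]; field_simp
  have i1 : Integrable fun z => (∑ i, ∑ j, ((x + u z • a) i - (x + u z • a) j) ^ 2 *
      w (Fin.tail A) (h - z • a) i j) / 2 :=
    (integrable_finsetSum _ fun i _ => integrable_finsetSum _ fun j _ => (hwz i j).1).div_const _
  have i2 : Integrable fun z => ∑ i, n z i * (x + u z • a) i ^ 2 :=
    integrable_finsetSum _ fun i _ => (hNz i).1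
  rw [hQ]
  refine ⟨hI1, (i1.sub i2).add hI1, ?_⟩
  have i12 : Integrable fun z => (∑ i, ∑ j, ((x + u z • a) i - (x + u z • a) j) ^ 2 *
      w (Fin.tail A) (h - z • a) i j) / 2 - ∑ i, n z i * (x + u z • a) i ^ 2 := i1.sub i2
  rw [integral_add i12 hI1, integral_sub i1 i2, integral_div,
    integral_finsetSum _ fun i _ => integrable_finsetSum _ fun j _ => (hwz i j).1,
    integral_finsetSum _ fun i _ => (hNz i).1]
  simp only [integral_finsetSum _ fun j _ => (hwz _ j).1, (hNz _).2]
  have hle : ∑ i, ∑ j, ∫ z, ((x + u z • a) i - (x + u z • a) j) ^ 2 *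
      w (Fin.tail A) (h - z • a) i j ≤ ∑ i, ∑ j, w A h i j * (x i - x j) ^ 2 +
        2 * (∑ i, ∑ j, (a i - a j) * (x i - x j) * U i j) +
        ∑ i, ∑ j, (a i - a j) * (a i - a j) * V i j := by
    simp only [Finset.mul_sum, ← Finset.sum_add_distrib]
    refine Finset.sum_le_sum fun i _ => Finset.sum_le_sum fun j _ => (hwz i j).2.trans (le_of_eq ?_)
    ring
  rw [sum_antisymm (fun i j => Om_symm A h i j _), sum_antisymm (fun i j => Om_symm A h i j _)] at hle
  have e1 : ∑ i, (a i * (2 * x i * (∫ z, u z * n z i) +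
      a i * ∫ z, u z ^ 2 * n z i) - ∑ j, (a i - a j) * (2 * x i * U i j + a i * V i j)) =
      ∑ i, (2 * x i * a i * (∫ z, u z * n z i) + a i ^ 2 * ∫ z, u z ^ 2 * n z i) -
      2 * (∑ i, ∑ j, (a i - a j) * (x i * U i j)) - ∑ i, ∑ j, (a i - a j) * (a i * V i j) := by
    simp only [Finset.mul_sum, ← Finset.sum_sub_distrib]
    refine Finset.sum_congr rfl fun i _ => ?_
    rw [sub_sub, ← Finset.sum_add_distrib]
    congr 1
    · ring
    · exact Finset.sum_congr rfl fun j _ => by ring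
  rw [e1] at hwfs
  have e2 : ∑ i, (N A h i * x i ^ 2 + 2 * x i * a i * (∫ z, u z * n z i) +
      a i ^ 2 * ∫ z, u z ^ 2 * n z i) = ∑ i, N A h i * x i ^ 2 +
      ∑ i, (2 * x i * a i * (∫ z, u z * n z i) + a i ^ 2 * ∫ z, u z ^ 2 * n z i) := by
    rw [← Finset.sum_add_distrib]
    exact Finset.sum_congr rfl fun i _ => by ring
  rw [e2]
  unfold Dq
  linarith

end

/-! ### Nonnegativity and rigidity of the quadratic form -/

section

variable {ι : Type*} [Fintype ι] [Nonempty ι] {k : ℕ}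

/-- Subtracting the weighted mean turns `Q` into `Dq`. -/
theorem Q_centre {A : Fin k → ι → ℝ} {h : ι → ℝ} (hA : Coer A) (hG : Good A h) (ξ : ι → ℝ) :
    ∃ m : ℝ, ∑ i, N A h i * (ξ i - m) = 0 ∧ Q A h ξ = Dq A h (fun i => ξ i - m) := by
  have hZ := (Z_pos hA h).ne'
  have hs := sum_N hA hG.ae_inj
  refine ⟨(∑ i, N A h i * ξ i) / Z A h, ?_, ?_⟩
  · simp only [mul_sub, Finset.sum_sub_distrib, ← Finset.sum_mul]
    rw [hs]; field_simp; ring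
  · set m := (∑ i, N A h i * ξ i) / Z A h with hm
    have e : ∑ i, N A h i * (ξ i - m) ^ 2 =
        ∑ i, N A h i * ξ i ^ 2 - 2 * m * (∑ i, N A h i * ξ i) + m ^ 2 * ∑ i, N A h i := by
      simp only [Finset.mul_sum, ← Finset.sum_sub_distrib, ← Finset.sum_add_distrib]
      exact Finset.sum_congr rfl fun i _ => by ring
    have e2 : ∑ i, N A h i * ξ i = m * Z A h := by rw [hm]; field_simp
    unfold Q Dq
    rw [e, hs, e2]
    simp only [sub_sub_sub_cancel_right]
    field_simp
    ring

/-- The induction step: nonnegativity passes from slices to the whole, and in the equality case the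
corrector is constant and almost every slice is an equality case. -/
theorem step {A : Fin (k + 1) → ι → ℝ} {h : ι → ℝ} (hA : Coer A) (hG : Good A h)
    (hQ : ∀ᵐ z : ℝ, ∀ ξ, 0 ≤ Q (Fin.tail A) (h - z • A 0) ξ)
    {x : ι → ℝ} (hx : ∑ i, N A h i * x i = 0) :
    0 ≤ Dq A h x ∧ (Dq A h x = 0 → ∃ c : ℝ, ∀ᵐ z : ℝ,
      Q (Fin.tail A) (h - z • A 0) (x + c • A 0) = 0 ∧
      ∑ i, N (Fin.tail A) (h - z • A 0) i * (x + c • A 0) i = 0) := by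
  obtain ⟨u, u', S, K, hS, hu, hd, hm, hK, hK', hode⟩ := exists_corrector hA hG hx
  obtain ⟨i1, i2, hle⟩ := slice_ineq hA hG hS hu hd hm hK hK' hode
  have p1 : 0 ≤ᵐ[volume] fun z => u' z ^ 2 * Z (Fin.tail A) (h - z • A 0) :=
    Eventually.of_forall fun z => mul_nonneg (sq_nonneg _) (Z_pos hA.tail _).le
  have p2 : 0 ≤ᵐ[volume] fun z => Q (Fin.tail A) (h - z • A 0) (x + u z • A 0) := by
    filter_upwards [hQ] with z hz using hz _
  have q1 := integral_nonneg_of_ae p1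
  have q2 := integral_nonneg_of_ae p2
  refine ⟨by linarith, fun h0 => ?_⟩
  have r1 := (integral_eq_zero_iff_of_nonneg_ae p1 i1).1 (by linarith)
  have r2 := (integral_eq_zero_iff_of_nonneg_ae p2 i2).1 (by linarith)
  have hu0 : ∀ᵐ z : ℝ, u' z = 0 := by
    filter_upwards [r1] with z hz
    have := (Z_pos hA.tail (h - z • A 0)).ne'
    simpa [this] using hz
  have hconst : ∀ z, u z = u 0 := fun z => by
    have h1 : IntervalIntegrable u' volume 0 z := by
      refine (intervalIntegrable_const (c := (0:ℝ))).congr_ae ?_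
      exact ae_restrict_of_ae (by filter_upwards [hu0] with z hz using hz.symm)
    have := integral_eq_of_hasDerivAt_off_countable u u' hS hu.continuousOn
      (fun y hy => hd y hy.2) h1
    rw [intervalIntegral.integral_congr_ae (g := fun _ => 0)
      (by filter_upwards [hu0] with z hz _ using hz)] at this
    simp at this
    linarith
  refine ⟨u 0, ?_⟩
  filter_upwards [hu0, r2] with z h1 h2
  rw [hconst z] at h2
  refine ⟨h2, ?_⟩
  have := hode z
  rw [h1, zero_mul, hconst z] at this
  simpa using this

/-- The indices with cells of positive mass span: a linear functional vanishing on them would make the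
potential constant along almost every, hence every, line in one direction. This contradicts its decay. -/
theorem eq_zero_of_active {A : Fin k → ι → ℝ} {h : ι → ℝ} (hA : Coer A)
    (hinj : ∀ᵐ y, Function.Injective (h - comb A y)) {X : Fin k → ℝ}
    (hX : ∀ i, 0 < N A h i → comb A X i = 0) : X = 0 := by
  have hae : ∀ᵐ y : Fin k → ℝ, ∀ i, N A h i = 0 → nu i (h - comb A y) = 0 := by
    rw [ae_all_iff]
    intro i
    by_cases hi : N A h i = 0
    · have := (integral_eq_zero_iff_of_nonneg (fun y => nu_nonneg i (h - comb A y))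
        (integrable_nu hA h i)).1 hi
      filter_upwards [this] with y hy _ using hy
    · exact Eventually.of_forall fun y H => absurd H hi
  have h1 : ∀ᵐ y : Fin k → ℝ, ∀ s : ℝ, mn (h - comb A (y + s • X)) ≤ mn (h - comb A y) := by
    filter_upwards [hae, hinj] with y hy hy' s
    obtain ⟨i, hi⟩ := exists_argmin_of_inj hy'
    have hp : 0 < N A h i := by
      refine lt_of_le_of_ne (N_nonneg _ _ _) fun e => ?_
      have := hy i e.symm
      rw [nu_of_lt hi] at this
      exact (Real.exp_pos _).ne' this
    have e : mn (h - comb A y) = (h - comb A y) i := mn_eq fun j => by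
      rcases eq_or_ne j i with rfl | hj
      · rfl
      · exact (hi j hj).le
    rw [e]
    refine (mn_le _ i).trans (le_of_eq ?_)
    simp [comb_add, comb_smul, hX i hp]
  have hcl : IsClosed {y : Fin k → ℝ | ∀ s : ℝ, mn (h - comb A (y + s • X)) ≤ mn (h - comb A y)} := by
    simp only [ofPred_forall]
    have := continuous_comb A
    have := continuous_mn (ι := ι)
    exact isClosed_iInter fun s => isClosed_le (by fun_prop) (by fun_prop)
  have hall : ∀ y : Fin k → ℝ, ∀ s : ℝ, mn (h - comb A (y + s • X)) ≤ mn (h - comb A y) := by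
    have := (Measure.dense_of_ae h1).closure_eq
    rw [IsClosed.closure_eq hcl] at this
    intro y
    exact (this ▸ mem_univ y : y ∈ {y | ∀ s : ℝ, mn (h - comb A (y + s • X)) ≤ mn (h - comb A y)})
  obtain ⟨ε, hε, H⟩ := hA
  by_contra hX0
  have hXn : 0 < ‖X‖ := norm_pos_iff.2 hX0
  have key : ∀ s : ℝ, 0 ≤ s → mn h ≤ ‖h‖ - ε * (s * ‖X‖) := fun s hs => by
    have h2 := hall (s • X) (-s)
    rw [← add_smul, add_neg_cancel, zero_smul, comb_zero, sub_zero] at h2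
    have h3 := mn_sub_comb_le H h (s • X)
    rw [norm_smul, Real.norm_eq_abs, abs_of_nonneg hs] at h3
    exact h2.trans h3
  have h4 := key ((|‖h‖ - mn h| + 1) / (ε * ‖X‖)) (by positivity)
  have e : ε * ((|‖h‖ - mn h| + 1) / (ε * ‖X‖) * ‖X‖) = |‖h‖ - mn h| + 1 := by field_simp
  rw [e] at h4
  have := le_abs_self (‖h‖ - mn h)
  linarith

/-- In dimension zero the integral is an evaluation at the only point. -/
theorem N_zero (A : Fin 0 → ι → ℝ) (h : ι → ℝ) (i : ι) : N A h i = nu i h := by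
  unfold N
  rw [volume_pi, Measure.pi_of_empty _ 0, integral_dirac, comb_zero, sub_zero]

/-- If `ξ` is linear on the active indices of almost every slice, it is linear on all active indices.
An active index stays active on nearby slices, so by `eq_zero_of_active` the functional is locally
constant in the height. For slices that are points there is only one functional, zero. -/
theorem glue {A : Fin (k + 1) → ι → ℝ} {h : ι → ℝ} (hA : Coer A) (hG : Good A h) {ξ : ι → ℝ}
    (H : ∀ᵐ z : ℝ, ∃ X, ∀ i, 0 < N (Fin.tail A) (h - z • A 0) i → ξ i = comb (Fin.tail A) X i) :
    ∃ X, ∀ i, 0 < N A h i → ξ i = comb (Fin.tail A) X i := by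
  suffices H' : ∃ X, ∀ᵐ z : ℝ, ∀ i, 0 < N (Fin.tail A) (h - z • A 0) i →
      ξ i = comb (Fin.tail A) X i by
    obtain ⟨X, hX⟩ := H'
    refine ⟨X, fun i hi => ?_⟩
    by_contra hne
    have : ∀ᵐ z : ℝ, N (Fin.tail A) (h - z • A 0) i = 0 := by
      filter_upwards [hX] with z hz
      exact ((N_nonneg _ _ _).eq_or_lt.resolve_right fun h' => hne (hz i h')).symm
    rw [N_succ hA, integral_congr_ae this] at hi
    simp at hi
  obtain ⟨S, -, hS, hinj⟩ := exists_ties hG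
  rcases Nat.eq_zero_or_pos k with rfl | hk
  · refine ⟨0, ?_⟩
    filter_upwards [H] with z ⟨X, hX⟩
    rwa [Subsingleton.elim X 0] at hX
  · rw [hS hk.ne'] at hinj
    have hnear : ∀ z : ℝ, ∀ᶠ z' in 𝓝 z, ∀ i, 0 < N (Fin.tail A) (h - z • A 0) i →
        0 < N (Fin.tail A) (h - z' • A 0) i := fun z => by
      rw [eventually_all]
      intro i
      by_cases hi : 0 < N (Fin.tail A) (h - z • A 0) i
      · filter_upwards [(continuousAt_N hA (hinj z (notMem_empty z)) i).eventually (lt_mem_nhds hi)]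
          with z' hz' _ using hz'
      · exact Eventually.of_forall fun _ h' => absurd h' hi
    have hex : ∀ z : ℝ, ∃ X, ∀ i, 0 < N (Fin.tail A) (h - z • A 0) i →
        ξ i = comb (Fin.tail A) X i := fun z => by
      obtain ⟨z', ⟨X, hX⟩, h1⟩ := ((mem_closure_iff_frequently.1
        (Measure.dense_of_ae H z)).and_eventually (hnear z)).exists
      exact ⟨X, fun i hi => hX i (h1 i hi)⟩
    choose X hX using hex
    have hloc : IsLocallyConstant X := by
      rw [IsLocallyConstant.iff_eventually_eq]
      intro z
      filter_upwards [hnear z] with z' hz'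
      rw [← sub_eq_zero]
      refine eq_zero_of_active hA.tail (hinj z (notMem_empty z)) fun i hi => ?_
      rw [comb_sub, Pi.sub_apply, ← hX z i hi, ← hX z' i (hz' i hi), sub_self]
    refine ⟨X 0, Eventually.of_forall fun z => ?_⟩
    rw [hloc.apply_eq_of_preconnectedSpace 0 z]
    exact hX z

/-- On vectors of weighted mean zero the form is nonnegative, and it vanishes only if the vector is
linear on the indices of positive mass. -/
theorem rigidity : ∀ {k : ℕ} {A : Fin k → ι → ℝ} {h : ι → ℝ}, Coer A → Good A h →
    ∀ {x : ι → ℝ}, ∑ i, N A h i * x i = 0 →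
    0 ≤ Dq A h x ∧ (Dq A h x = 0 → ∃ X, ∀ i, 0 < N A h i → x i = comb A X i)
  | 0, A, h, hA, hG, x, hx => by
    obtain ⟨i, hi⟩ := exists_argmin_of_inj (h := h) hG
    have hz : ∀ j, j ≠ i → nu j h = 0 := fun j hj => nu_eq_zero hj.symm (hi j hj).le
    have hxi : x i = 0 := by
      simp only [N_zero] at hx
      rw [Finset.sum_eq_single i (fun j _ hj => by rw [hz j hj, zero_mul]) (by simp),
        nu_of_lt hi] at hx
      simpa using hx
    have hD : Dq A h x = 0 := by
      unfold Dq
      simp only [N_zero, w, zero_mul, Finset.sum_const_zero, zero_div, zero_sub]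
      rw [Finset.sum_eq_single i (fun j _ hj => by rw [hz j hj, zero_mul]) (by simp), hxi]
      simp
    refine ⟨hD.ge, fun _ => ⟨0, fun j hj => ?_⟩⟩
    rw [N_zero] at hj
    rw [comb_zero]
    by_cases e : j = i
    · rw [e, hxi]; rfl
    · rw [hz j e] at hj; exact absurd hj (lt_irrefl _)
  | k + 1, A, h, hA, hG, x, hx => by
    have hQ : ∀ᵐ z : ℝ, ∀ ξ, 0 ≤ Q (Fin.tail A) (h - z • A 0) ξ := by
      filter_upwards [hG.tail_ae] with z hz ξ
      obtain ⟨m, h1, h2⟩ := Q_centre hA.tail hz ξ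
      rw [h2]
      exact (rigidity hA.tail hz h1).1
    obtain ⟨h1, h2⟩ := step hA hG hQ hx
    refine ⟨h1, fun h0 => ?_⟩
    obtain ⟨c, hc⟩ := h2 h0
    obtain ⟨X, hX⟩ := glue hA hG (ξ := x + c • A 0) (by
      filter_upwards [hc, hG.tail_ae] with z ⟨h3, h4⟩ hz
      refine (rigidity hA.tail hz h4).2 ?_
      unfold Q at h3
      rw [h4] at h3
      simpa using h3)
    refine ⟨Fin.cons (-c) X, fun i hi => ?_⟩
    have := hX i hi
    rw [comb_cons]
    simp only [Pi.add_apply, Pi.smul_apply, smul_eq_mul] at this ⊢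
    linarith

end

/-! ### Averaging over the symmetry group -/

section

variable {ι : Type*} [Fintype ι] [Nonempty ι] {k : ℕ}

theorem comb_injective {A : Fin k → ι → ℝ} (hA : Coer A) {y : Fin k → ℝ} (hy : comb A y = 0) :
    y = 0 := by
  obtain ⟨ε, hε, H⟩ := hA
  obtain ⟨i, hi⟩ := H y
  rw [hy, Pi.zero_apply] at hi
  have : ‖y‖ ≤ 0 := by
    by_contra h
    have := mul_pos hε (not_le.1 h)
    linarith
  simpa using this

theorem nu_comp (τ : Equiv.Perm ι) (i : ι) (g : ι → ℝ) : nu (τ i) g = nu i (g ∘ τ) := by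
  unfold nu
  have : (∀ j, j ≠ τ i → g (τ i) < g j) ↔ ∀ j, j ≠ i → (g ∘ τ) i < (g ∘ τ) j := by
    constructor
    · exact fun H j hj => H (τ j) (τ.injective.ne hj)
    · intro H j hj
      have := H (τ.symm j) (fun e => hj (by rw [← e, τ.apply_symm_apply]))
      simpa using this
  by_cases H : ∀ j, j ≠ τ i → g (τ i) < g j
  · rw [if_pos H, if_pos (this.1 H)]; rfl
  · rw [if_neg H, if_neg (mt this.2 H)]

/-- The permutations of the indices that carry linear functionals to linear functionals, that is, those
induced by linear maps permuting the columns of `A`. -/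
def symGroup (A : Fin k → ι → ℝ) (hA : Coer A) : Subgroup (Equiv.Perm ι) where
  carrier := {τ | ∃ L : (Fin k → ℝ) →ₗ[ℝ] (Fin k → ℝ), ∀ y, comb A y ∘ τ = comb A (L y)}
  one_mem' := ⟨LinearMap.id, fun y => rfl⟩
  mul_mem' := by
    rintro τ τ' ⟨L, hL⟩ ⟨L', hL'⟩
    refine ⟨L' ∘ₗ L, fun y => ?_⟩
    rw [LinearMap.comp_apply, ← hL', ← hL]
    rfl
  inv_mem' := by
    rintro τ ⟨L, hL⟩
    have hi : Function.Injective L := by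
      rw [injective_iff_map_eq_zero]
      intro y hy
      refine comb_injective hA (funext fun i => ?_)
      have := congrFun (hL y) (τ.symm i)
      rw [hy, comb_zero] at this
      simpa using this
    refine ⟨(LinearEquiv.ofInjectiveEndo L hi).symm, fun y => ?_⟩
    obtain ⟨x, rfl⟩ := (LinearEquiv.ofInjectiveEndo L hi).surjective y
    funext i
    have := congrFun (hL x) (τ⁻¹ i)
    simp only [LinearEquiv.coe_coe, LinearEquiv.symm_apply_apply, Function.comp_apply] at this ⊢
    rw [LinearEquiv.coe_ofInjectiveEndo, ← this]
    simp

instance (A : Fin k → ι → ℝ) (hA : Coer A) : Fintype (symGroup A hA) := Fintype.ofFinite _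

/-- Symmetric indices have equal masses. The masses are multiplied by the inverse of the absolute value
of the determinant, which is one because the total is unchanged. -/
theorem N_sym {A : Fin k → ι → ℝ} (hA : Coer A) (hG : Good A 0) {τ : Equiv.Perm ι}
    (hτ : τ ∈ symGroup A hA) (i : ι) : N A 0 (τ i) = N A 0 i := by
  obtain ⟨L, hL⟩ := hτ
  have hi : Function.Injective L := by
    rw [injective_iff_map_eq_zero]
    intro y hy
    refine comb_injective hA (funext fun i => ?_)
    have := congrFun (hL y) (τ.symm i)
    rw [hy, comb_zero] at this
    simpa using this
  have hdet : LinearMap.det L ≠ 0 := (LinearEquiv.ofInjectiveEndo L hi).isUnit_det'.ne_zero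
  have key : ∀ i, N A 0 (τ i) = |(LinearMap.det L)⁻¹| * N A 0 i := by
    intro i
    have hLc : Continuous L := L.continuous_of_finiteDimensional
    have hc := continuous_comb A
    have h1 : Measurable fun y => nu i (0 - comb A y) := (measurable_nu i).comp (by fun_prop)
    have h2 := integral_map (μ := volume) hLc.aemeasurable (f := fun y => nu i (0 - comb A y))
      h1.aestronglyMeasurable
    rw [Measure.map_linearMap_addHaar_eq_smul_addHaar _ hdet, integral_smul_measure,
      ENNReal.toReal_ofReal (abs_nonneg _), smul_eq_mul] at h2
    unfold N
    rw [h2]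
    congr 1
    funext y
    rw [nu_comp, ← hL]
    rfl
  have hs : ∑ i, N A 0 (τ i) = ∑ i, N A 0 i := Equiv.sum_comp τ _
  simp only [key, ← Finset.mul_sum] at hs
  rw [sum_N hA hG.ae_inj] at hs
  rw [key, (mul_eq_right₀ (Z_pos hA 0).ne').1 hs, one_mul]

/-- The functional `y` attains its maximum over the columns of `A` exactly at `i` and `j`. -/
def Exposes (A : Fin k → ι → ℝ) (i j : ι) (y : Fin k → ℝ) : Prop :=
  comb A y i = comb A y j ∧ ∀ l, l ≠ i → l ≠ j → comb A y l < comb A y i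

/-- An interface of nonzero weight has a point, which exposes the edge `ij`. -/
theorem exists_exposes {A : Fin k → ι → ℝ} {i j : ι} (hw : w A 0 i j ≠ 0) :
    ∃ y, Exposes A i j y := by
  cases k with
  | zero => exact absurd rfl hw
  | succ k =>
    by_contra! H
    refine hw ?_
    simp only [w]
    refine integral_eq_zero_of_ae (Eventually.of_forall fun y => ?_)
    simp only [om, G, Pi.zero_apply, div_eq_zero_iff]
    left
    refine if_neg fun h => H (Fin.cons (zc (A 0) i j (0 - comb (Fin.tail A) y)) y) ?_
    rw [Exposes, comb_cons]
    simp only [Pi.sub_apply, Pi.zero_apply, Pi.add_apply, Pi.smul_apply, smul_eq_mul] at h ⊢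
    refine ⟨by linarith [h.1], fun l h1 h2 => by linarith [h.2 l h1 h2]⟩

/-- The interface weights summed over the symmetry group. The single weights are computed from
coordinates and need not be invariant under the group. -/
def wbar (A : Fin k → ι → ℝ) (hA : Coer A) (i j : ι) : ℝ :=
  ∑ τ : symGroup A hA, w A 0 (τ.1 i) (τ.1 j)

theorem wbar_sym {A : Fin k → ι → ℝ} (hA : Coer A) {τ : Equiv.Perm ι} (hτ : τ ∈ symGroup A hA)
    (i j : ι) : wbar A hA (τ i) (τ j) = wbar A hA i j := by
  unfold wbar
  exact Fintype.sum_equiv (Equiv.mulRight ⟨τ, hτ⟩) _ _ fun _ => rfl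

theorem wbar_comm {A : Fin k → ι → ℝ} (hA : Coer A) (i j : ι) :
    wbar A hA i j = wbar A hA j i := by
  unfold wbar
  exact Finset.sum_congr rfl fun τ _ => w_symm _ _ _

theorem wbar_self {A : Fin k → ι → ℝ} (hA : Coer A) (i : ι) : wbar A hA i i = 0 := by
  unfold wbar
  exact Finset.sum_eq_zero fun τ _ => w_self _ _

theorem wbar_eq_zero {A : Fin k → ι → ℝ} (hA : Coer A) {i j : ι} (H : ∀ y, ¬ Exposes A i j y) :
    wbar A hA i j = 0 := by
  unfold wbar
  refine Finset.sum_eq_zero fun τ _ => ?_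
  by_contra hw
  obtain ⟨y, hy1, hy2⟩ := exists_exposes hw
  obtain ⟨L, hL⟩ := τ.2
  refine H (L y) ?_
  rw [Exposes, ← hL]
  exact ⟨hy1, fun l h1 h2 => hy2 _ (τ.1.injective.ne h1) (τ.1.injective.ne h2)⟩

/-- The quadratic form with the averaged interface weights, multiplied by the order of the group. -/
def Dbar (A : Fin k → ι → ℝ) (hA : Coer A) (x : ι → ℝ) : ℝ :=
  (∑ i, ∑ j, wbar A hA i j * (x i - x j) ^ 2) / 2 -
    Fintype.card (symGroup A hA) * ∑ i, N A 0 i * x i ^ 2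

/-- The averaged form is the sum of the transforms of `Dq` under the group. -/
theorem Dbar_eq {A : Fin k → ι → ℝ} (hA : Coer A) (hG : Good A 0) (x : ι → ℝ) :
    Dbar A hA x = ∑ τ : symGroup A hA, Dq A 0 (x ∘ τ.1.symm) := by
  have h1 : ∀ τ : symGroup A hA, Dq A 0 (x ∘ τ.1.symm) =
      (∑ i, ∑ j, w A 0 (τ.1 i) (τ.1 j) * (x i - x j) ^ 2) / 2 - ∑ i, N A 0 i * x i ^ 2 := by
    intro τ
    have e1 : ∑ i, N A 0 i * (x ∘ τ.1.symm) i ^ 2 = ∑ i, N A 0 i * x i ^ 2 := by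
      rw [← Equiv.sum_comp τ.1]
      exact Finset.sum_congr rfl fun i _ => by rw [N_sym hA hG τ.2]; simp
    have e2 : ∑ i, ∑ j, w A 0 i j * ((x ∘ τ.1.symm) i - (x ∘ τ.1.symm) j) ^ 2 =
        ∑ i, ∑ j, w A 0 (τ.1 i) (τ.1 j) * (x i - x j) ^ 2 := by
      rw [← Equiv.sum_comp τ.1]
      refine Finset.sum_congr (M := ℝ) rfl fun i _ => ?_
      rw [← Equiv.sum_comp τ.1]
      simp
    unfold Dq
    rw [e1, e2]
  simp only [h1, Finset.sum_sub_distrib, ← Finset.sum_div]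
  unfold Dbar wbar
  refine congrArg₂ (· - ·) (congrArg (· / 2) ?_) (by simp)
  symm
  rw [Finset.sum_comm]
  refine Finset.sum_congr rfl fun i _ => ?_
  rw [Finset.sum_comm]
  exact Finset.sum_congr rfl fun j _ => (Finset.sum_mul _ _ _).symm

/-- A permutation of the indices that respects adjacency and agrees on each index and on each adjacent
pair with some symmetry carries linear functionals to linear functionals. It preserves `Dbar`, which
vanishes on a linear functional, so each term of `Dbar_eq` vanishes on the permuted functional and
`rigidity` applies. -/
theorem linear_of_orbits {A : Fin k → ι → ℝ} (hA : Coer A) (hG : Good A 0)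
    (hN : ∀ i, 0 < N A 0 i) (Adj : ι → ι → Prop)
    (hAdj : ∀ i j y, i ≠ j → Exposes A i j y → Adj i j) (σ : Equiv.Perm ι)
    (hσE : ∀ i j, Adj i j ↔ Adj (σ i) (σ j))
    (hσ1 : ∀ i, ∃ τ ∈ symGroup A hA, τ i = σ i)
    (hσ2 : ∀ i j, Adj i j → ∃ τ ∈ symGroup A hA,
      (τ i = σ i ∧ τ j = σ j) ∨ (τ i = σ j ∧ τ j = σ i)) (y : Fin k → ℝ) :
    ∃ X, comb A y ∘ σ = comb A X := by
  have hNσ : ∀ i, N A 0 (σ i) = N A 0 i := fun i => by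
    obtain ⟨τ, hτ, e⟩ := hσ1 i
    rw [← e, N_sym hA hG hτ]
  have hw0 : ∀ i j, i ≠ j → ¬ Adj i j → wbar A hA i j = 0 := fun i j hij hn =>
    wbar_eq_zero hA fun y hy => hn (hAdj i j y hij hy)
  have hwσ : ∀ i j, wbar A hA (σ i) (σ j) = wbar A hA i j := fun i j => by
    rcases eq_or_ne i j with rfl | hij
    · rw [wbar_self, wbar_self]
    by_cases hadj : Adj i j
    · obtain ⟨τ, hτ, ⟨e1, e2⟩ | ⟨e1, e2⟩⟩ := hσ2 i j hadj
      · rw [← e1, ← e2, wbar_sym hA hτ]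
      · rw [← e1, ← e2, wbar_sym hA hτ, wbar_comm]
    · rw [hw0 i j hij hadj, hw0 _ _ (σ.injective.ne hij) (mt (hσE i j).2 hadj)]
  set g := comb A y
  have hDσ : Dbar A hA (g ∘ σ) = Dbar A hA g := by
    unfold Dbar
    rw [← Equiv.sum_comp σ (fun i => N A 0 i * g i ^ 2),
      ← Equiv.sum_comp σ (fun i => ∑ j, wbar A hA i j * (g i - g j) ^ 2)]
    congr 2
    · refine Finset.sum_congr rfl fun i _ => ?_
      rw [← Equiv.sum_comp σ (fun j => wbar A hA (σ i) j * (g (σ i) - g j) ^ 2)]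
      exact Finset.sum_congr rfl fun j _ => by rw [hwσ]; rfl
    · exact Finset.sum_congr rfl fun i _ => by rw [hNσ]; rfl
  have hD0 : Dbar A hA g = 0 := by
    rw [Dbar_eq hA hG]
    refine Finset.sum_eq_zero fun τ _ => ?_
    obtain ⟨L, hL⟩ := (symGroup A hA).inv_mem τ.2
    have : g ∘ τ.1.symm = comb A (L y) := hL y
    rw [this]
    exact D_span hA hG _
  have hmean : ∑ i, N A 0 i * (g ∘ σ) i = 0 := by
    rw [← sum_span hA hG y, ← Equiv.sum_comp σ (fun i => N A 0 i * comb A y i)]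
    exact Finset.sum_congr rfl fun i _ => by rw [hNσ]; rfl
  have hnonneg : ∀ τ : symGroup A hA, 0 ≤ Dq A 0 ((g ∘ σ) ∘ τ.1.symm) := fun τ => by
    refine (rigidity hA hG ?_).1
    rw [← hmean, ← Equiv.sum_comp τ.1]
    exact Finset.sum_congr rfl fun i _ => by rw [N_sym hA hG τ.2]; simp
  rw [← hDσ, Dbar_eq hA hG, Finset.sum_eq_zero_iff_of_nonneg fun τ _ => hnonneg τ] at hD0
  obtain ⟨X, hX⟩ := (rigidity hA hG hmean).2 (hD0 1 (Finset.mem_univ _))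
  exact ⟨X, funext fun i => hX i (hN i)⟩

/-- An index that is the strict minimiser somewhere has a cell of positive mass. -/
theorem N_pos {A : Fin k → ι → ℝ} (hA : Coer A) {h : ι → ℝ} {i : ι} {y : Fin k → ℝ}
    (hy : ∀ j, j ≠ i → (h - comb A y) i < (h - comb A y) j) : 0 < N A h i := by
  unfold N
  rw [integral_pos_iff_support_of_nonneg (fun y => nu_nonneg _ _) (integrable_nu hA h i)]
  have hc := continuous_comb A
  have : ∀ᶠ y' in 𝓝 y, ∀ j, j ≠ i → (h - comb A y') i < (h - comb A y') j :=
    (show Continuous fun y => h - comb A y by fun_prop).continuousAt.eventually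
      (eventually_lt_of_argmin hy)
  refine (Measure.measure_pos_of_mem_nhds volume this).trans_le (measure_mono fun y' hy' => ?_)
  rw [Function.mem_support, nu_of_lt hy']
  exact (Real.exp_pos _).ne'

theorem ae_ne_zero_of_affine {p q : ℝ} (hp : p ≠ 0) : ∀ᵐ z : ℝ, q - z * p ≠ 0 := by
  have : ∀ᵐ z : ℝ, z ≠ q / p := Measure.ae_ne _ _
  filter_upwards [this] with z hz e
  exact hz (by field_simp; linarith)

theorem NC.symm {a b : ι → ℝ} (H : NC a b) : NC b a := fun i j l h1 h2 h3 e =>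
  H i j l h1 h2 h3 (by linarith)

/-- General position follows from conditions on the coordinate rows alone, once at least two coordinates
are available; the conditions on `h` only matter in dimensions zero and one. -/
theorem good_of_generic : ∀ {k : ℕ} {A : Fin k → ι → ℝ} {h : ι → ℝ},
    (∀ p, Function.Injective (A p)) → (∀ p q, p ≠ q → NC (A p) (A q)) →
    (k = 0 → Function.Injective h) → (∀ p, k = 1 → NC h (A p)) → Good A h
  | 0, A, h, _, _, h0, _ => h0 rfl
  | k + 1, A, h, hi, hnc, _, h1 => by
    refine ⟨hi 0, ?_, ?_⟩
    · cases k with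
      | zero =>
        refine Eventually.of_forall fun y => ?_
        rw [Subsingleton.elim y 0, comb_zero, sub_zero]
        exact h1 0 rfl
      | succ k =>
        unfold NC
        simp only [ae_all_iff]
        intro i j l hij hil hjl
        have hd : (fun p => (Fin.tail A p j - Fin.tail A p i) * (A 0 l - A 0 i) -
            (Fin.tail A p l - Fin.tail A p i) * (A 0 j - A 0 i)) ≠ 0 := fun e => by
          have := congrFun e 0
          exact hnc 1 0 (by simp) i j l hij hil hjl (sub_eq_zero.1 this)
        filter_upwards [hyperplane_null hd
          ((h j - h i) * (A 0 l - A 0 i) - (h l - h i) * (A 0 j - A 0 i))] with y hy e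
        refine hy ?_
        simp only [Pi.sub_apply, comb] at e
        have e2 : ∑ p, y p * ((Fin.tail A p j - Fin.tail A p i) * (A 0 l - A 0 i) -
            (Fin.tail A p l - Fin.tail A p i) * (A 0 j - A 0 i)) =
            (∑ p, y p * Fin.tail A p j - ∑ p, y p * Fin.tail A p i) * (A 0 l - A 0 i) -
            (∑ p, y p * Fin.tail A p l - ∑ p, y p * Fin.tail A p i) * (A 0 j - A 0 i) := by
          simp only [← Finset.sum_sub_distrib, Finset.sum_mul]
          exact Finset.sum_congr rfl fun p _ => by ring
        rw [e2]
        linarith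
    · have e1 : ∀ᵐ z : ℝ, k = 0 → Function.Injective (h - z • A 0) := by
        have : ∀ᵐ z : ℝ, ∀ i j, i ≠ j → (h i - h j) - z * (A 0 i - A 0 j) ≠ 0 := by
          simp only [ae_all_iff]
          exact fun i j hij => ae_ne_zero_of_affine (sub_ne_zero.2 ((hi 0).ne hij))
        filter_upwards [this] with z hz _ i j hij
        by_contra hne
        refine hz i j hne ?_
        simp only [Pi.sub_apply, Pi.smul_apply, smul_eq_mul] at hij
        linarith
      have e2 : ∀ᵐ z : ℝ, ∀ p, k = 1 → NC (h - z • A 0) (Fin.tail A p) := by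
        unfold NC
        simp only [ae_all_iff]
        intro p hk i j l hij hil hjl
        have := hnc 0 p.succ (Fin.succ_ne_zero p).symm i j l hij hil hjl
        filter_upwards [ae_ne_zero_of_affine (sub_ne_zero.2 this)
          (q := (h j - h i) * (A p.succ l - A p.succ i) -
            (h l - h i) * (A p.succ j - A p.succ i))] with z hz e
        refine hz ?_
        simp only [Pi.sub_apply, Pi.smul_apply, smul_eq_mul, Fin.tail] at e
        linarith
      filter_upwards [e1, e2] with z h2 h3
      exact good_of_generic (fun p => hi p.succ)
        (fun p q hpq => hnc _ _ (fun e => hpq (Fin.succ_injective _ e))) h2 h3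

end

/-! ### From polytopes to families of affine functions -/

section Geometry

variable {ι E : Type*} [Fintype ι] [Nonempty ι] [NormedAddCommGroup E] [InnerProductSpace ℝ E]
  [FiniteDimensional ℝ E]

/-- There is a vector orthogonal to none of finitely many nonzero vectors. -/
theorem exists_avoid {S : Set E} (hS : S.Finite) :
    ∃ x : E, ∀ w ∈ S, w ≠ 0 → inner ℝ x w ≠ 0 := by
  have : Finite {w // w ∈ S ∧ w ≠ 0} := (hS.subset fun w hw => hw.1 : {w | w ∈ S ∧ w ≠ 0}.Finite)
  obtain ⟨x, hx⟩ := Module.Dual.exists_forall_ne_zero_of_forall_exists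
    (fun w : {w // w ∈ S ∧ w ≠ 0} => innerₛₗ ℝ (w : E))
    fun w => ⟨w, by simpa using w.2.2⟩
  refine ⟨x, fun w h1 h2 => ?_⟩
  rw [real_inner_comm]
  exact hx ⟨w, h1, h2⟩

/-- No three vertices are collinear. -/
theorem not_parallel {v : ι → E} {P : Set E} (hv : ∀ i, v i ∈ P.extremePoints ℝ)
    (hinj : Function.Injective v) {i j l : ι} (hij : i ≠ j) (hil : i ≠ l) (hjl : j ≠ l) {s t : ℝ}
    (hs : s ≠ 0) : s • (v j - v i) - t • (v l - v i) ≠ 0 := by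
  intro e
  have hcol : Collinear ℝ {v i, v j, v l} := by
    rw [collinear_iff_of_mem (p₀ := v i) (by simp)]
    refine ⟨v l - v i, fun p hp => ?_⟩
    rcases hp with rfl | rfl | rfl
    · exact ⟨0, by simp⟩
    · refine ⟨t / s, ?_⟩
      have : v j - v i = (t / s) • (v l - v i) := by
        rw [div_eq_inv_mul, mul_smul, ← sub_eq_zero.1 e, inv_smul_smul₀ hs]
      rw [vadd_eq_add, ← this]
      abel
    · exact ⟨1, by simp⟩
  have key : ∀ a b c : ι, a ≠ b → b ≠ c → ¬ Wbtw ℝ (v a) (v b) (v c) := fun a b c hab hbc hw => by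
    rcases (mem_extremePoints_iff_forall_segment.1 (hv b)).2 _ (hv a).1 _ (hv c).1
      (mem_segment_iff_wbtw.2 hw) with h | h
    · exact hab (hinj h)
    · exact hbc (hinj h).symm
  rcases hcol.wbtw_or_wbtw_or_wbtw with h | h | h
  · exact key _ _ _ hij hjl h
  · exact key _ _ _ hjl hil.symm h
  · exact key _ _ _ hil.symm hij h

/-- Linearly independent directions in which the vertices have distinct coordinates, and no three
vertices project to collinear points in the plane of two of the directions. -/
theorem exists_generic {v : ι → E} {P : Set E} (hv : ∀ i, v i ∈ P.extremePoints ℝ)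
    (hinj : Function.Injective v) : ∀ m : ℕ, m ≤ Module.finrank ℝ E →
    ∃ u : Fin m → E, LinearIndependent ℝ u ∧
      (∀ p, Function.Injective fun i => inner ℝ (u p) (v i)) ∧
      ∀ p q, p ≠ q → NC (fun i => inner ℝ (u p) (v i)) fun i => inner ℝ (u q) (v i)
  | 0, _ => ⟨Fin.elim0, linearIndependent_empty_type, fun p => p.elim0, fun p => p.elim0⟩
  | m + 1, hm => by
    obtain ⟨u, hu, hu1, hu2⟩ := exists_generic hv hinj m (by omega)
    obtain ⟨z, hz, hz0⟩ : ∃ z ∈ (Submodule.span ℝ (range u))ᗮ, z ≠ 0 := by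
      refine Submodule.exists_mem_ne_zero_of_ne_bot fun h => ?_
      rw [Submodule.orthogonal_eq_bot_iff] at h
      have := finrank_range_le_card (R := ℝ) u
      rw [Set.finrank, h, finrank_top, Fintype.card_fin] at this
      omega
    let c : Fin m × ι × ι × ι → E := fun a =>
      inner ℝ (u a.1) (v a.2.2.2 - v a.2.1) • (v a.2.2.1 - v a.2.1) -
        inner ℝ (u a.1) (v a.2.2.1 - v a.2.1) • (v a.2.2.2 - v a.2.1)
    obtain ⟨x, hx⟩ := exists_avoid (((finite_singleton z).union
      (finite_range fun a : ι × ι => v a.1 - v a.2)).union (finite_range c))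
    have hxz : inner ℝ x z ≠ 0 := hx z (by simp) hz0
    have hxi : Function.Injective fun i => inner ℝ x (v i) := fun i j e => by
      by_contra hij
      refine hx (v i - v j) (Or.inl (Or.inr ⟨(i, j), rfl⟩)) (sub_ne_zero.2 (hinj.ne hij)) ?_
      rw [inner_sub_right]
      exact sub_eq_zero.2 e
    have hxn : ∀ q, NC (fun i => inner ℝ x (v i)) fun i => inner ℝ (u q) (v i) := by
      intro q i j l hij hil hjl e
      refine hx (c (q, i, j, l)) (Or.inr ⟨_, rfl⟩) (not_parallel hv hinj hij hil hjl ?_) ?_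
      · rw [inner_sub_right, sub_ne_zero]
        exact (hu1 q).ne hil.symm
      · simp only [c, inner_sub_right, inner_smul_right]
        linarith
    refine ⟨Fin.cons x u, linearIndependent_finCons.2 ⟨hu, fun h => hxz ?_⟩, ?_, ?_⟩
    · exact (Submodule.mem_orthogonal _ _).1 hz x h
    · exact Fin.cases hxi hu1
    · refine Fin.cases (Fin.cases (fun h => absurd rfl h) fun q _ => hxn q) fun p =>
        Fin.cases (fun _ => (hxn p).symm) fun q h => hu2 p q fun e => h (by rw [e])

/-- A functional maximal at exactly two vertices exposes the segment between them as a face. -/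
theorem segment_isExtreme {v : ι → E} {P : Set E} (hP : P = convexHull ℝ (range v)) {U : E}
    {i j : ι} (hij : inner ℝ U (v i) = inner ℝ U (v j))
    (hl : ∀ l, l ≠ i → l ≠ j → inner ℝ U (v l) < inner ℝ U (v i)) :
    IsExtreme ℝ P (segment ℝ (v i) (v j)) := by
  have hle : ∀ l, inner ℝ U (v l) ≤ inner ℝ U (v i) := fun l => by
    by_cases h1 : l = i
    · rw [h1]
    by_cases h2 : l = j
    · rw [h2, hij]
    · exact (hl l h1 h2).le
  have hmem : ∀ l, v l ∈ P := fun l => hP ▸ subset_convexHull ℝ _ (mem_range_self l)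
  have hPle : ∀ x ∈ P, inner ℝ U x ≤ inner ℝ U (v i) := by
    intro x hx
    rw [hP] at hx
    refine convexHull_min (t := {x | inner ℝ U x ≤ inner ℝ U (v i)}) ?_ ?_ hx
    · rintro _ ⟨l, rfl⟩
      exact hle l
    · exact convex_halfSpace_le (innerₛₗ ℝ U).isLinear _
  have : segment ℝ (v i) (v j) = (innerSL ℝ U).toExposed P := by
    apply Subset.antisymm
    · intro x hx
      refine ⟨(hP ▸ convex_convexHull ℝ _ : Convex ℝ P).segment_subset (hmem i) (hmem j) hx, ?_⟩
      obtain ⟨a, b, -, -, hab, rfl⟩ := hx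
      intro y hy
      have e : inner ℝ U (a • v i + b • v j) = inner ℝ U (v i) := by
        rw [inner_add_right, inner_smul_right, inner_smul_right, ← hij, ← add_mul, hab, one_mul]
      simpa [e] using hPle y hy
    · rintro x ⟨hx, hmax⟩
      have h1 : inner ℝ U (v i) ≤ inner ℝ U x := by simpa using hmax _ (hmem i)
      rw [hP, mem_convexHull_iff_exists_fintype] at hx
      obtain ⟨κ, _, c, z, hc0, hc1, hz, rfl⟩ := hx
      have hzle : ∀ a, inner ℝ U (z a) ≤ inner ℝ U (v i) := fun a => by
        obtain ⟨l, e⟩ := hz a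
        rw [← e]
        exact hle l
      have hsum : ∑ a, c a * (inner ℝ U (v i) - inner ℝ U (z a)) = 0 := by
        refine le_antisymm ?_
          (Finset.sum_nonneg fun a _ => mul_nonneg (hc0 a) (sub_nonneg.2 (hzle a)))
        rw [inner_sum] at h1
        simp only [inner_smul_right] at h1
        simp only [mul_sub, Finset.sum_sub_distrib, ← Finset.sum_mul, hc1]
        linarith
      rw [Finset.sum_eq_zero_iff_of_nonneg fun a _ =>
        mul_nonneg (hc0 a) (sub_nonneg.2 (hzle a))] at hsum
      classical
      have e : ∑ a, c a • z a = ∑ a, c a • (if c a = 0 then v i else z a) :=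
        Finset.sum_congr rfl fun a _ => by split_ifs with h <;> simp [h]
      rw [e]
      refine (convex_segment _ _).sum_mem (fun a _ => hc0 a) hc1 fun a _ => ?_
      split_ifs with h
      · exact left_mem_segment _ _ _
      obtain ⟨l, el⟩ := hz a
      have h2 : inner ℝ U (v i) - inner ℝ U (z a) = 0 :=
        (mul_eq_zero.1 (hsum a (Finset.mem_univ a))).resolve_left h
      by_cases h3 : l = i
      · rw [← el, h3]
        exact left_mem_segment _ _ _
      by_cases h4 : l = j
      · rw [← el, h4]
        exact right_mem_segment _ _ _
      have := hl l h3 h4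
      rw [el] at this
      linarith
  rw [this]
  exact ContinuousLinearMap.toExposed.isExposed.isExtreme

/-- Every vertex is the unique maximiser of some functional. -/
theorem exists_separating {v : ι → E} {P : Set E} (hP : P = convexHull ℝ (range v))
    (hvert : range v = P.extremePoints ℝ) (hinj : Function.Injective v) (i : ι) :
    ∃ U : E, ∀ j, j ≠ i → inner ℝ U (v j) < inner ℝ U (v i) := by
  have hc : Convex ℝ P := hP ▸ convex_convexHull ℝ _
  have hi : v i ∈ P.extremePoints ℝ := hvert ▸ mem_range_self i
  have hn := (hc.mem_extremePoints_iff_mem_sdiff_convexHull_sdiff.1 hi).2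
  have hn' : v i ∉ convexHull ℝ (v '' {i}ᶜ) := fun h => hn (convexHull_mono ?_ h)
  · obtain ⟨f, s, h1, h2⟩ := geometric_hahn_banach_closed_point (convex_convexHull ℝ (v '' {i}ᶜ))
      ((toFinite (v '' {i}ᶜ)).isClosed_convexHull ℝ) hn'
    have := FiniteDimensional.complete ℝ E
    refine ⟨(InnerProductSpace.toDual ℝ E).symm f, fun j hj => ?_⟩
    rw [InnerProductSpace.toDual_symm_apply, InnerProductSpace.toDual_symm_apply]
    exact (h1 _ (subset_convexHull ℝ _ ⟨j, hj, rfl⟩)).trans h2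
  · rintro _ ⟨j, hj, rfl⟩
    refine ⟨hP ▸ subset_convexHull ℝ _ (mem_range_self j), fun h => hj (hinj h)⟩

/-- A linear symmetry permutes the vertices. -/
theorem exists_perm {v : ι → E} {P : Set E} (hvert : range v = P.extremePoints ℝ)
    (hinj : Function.Injective v) (T : E ≃ₗ[ℝ] E) (hT : T '' P = P) :
    ∃ τ : Equiv.Perm ι, ∀ i, T (v i) = v (τ i) := by
  have : ∀ i, ∃ j, T (v i) = v j := fun i => by
    have h1 : v i ∈ P.extremePoints ℝ := hvert ▸ mem_range_self i
    have h2 : T (v i) ∈ P.extremePoints ℝ := by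
      rw [← hT, ← image_extremePoints]
      exact mem_image_of_mem _ h1
    rw [← hvert] at h2
    obtain ⟨j, hj⟩ := h2
    exact ⟨j, hj.symm⟩
  choose f hf using this
  have hfi : Function.Injective f := fun i j e => hinj (T.injective (by rw [hf, hf, e]))
  exact ⟨Equiv.ofBijective f (Finite.injective_iff_bijective.1 hfi), hf⟩

/-- Lower bound for the support function of a polytope with zero in its interior. -/
theorem exists_support {v : ι → E} {P : Set E} (hP : P = convexHull ℝ (range v))
    (h0 : (0 : E) ∈ interior P) : ∃ r > 0, ∀ Y : E, Y ≠ 0 → ∃ i, r * ‖Y‖ ≤ inner ℝ Y (v i) := by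
  obtain ⟨r, hr, hball⟩ := Metric.isOpen_iff.1 isOpen_interior 0 h0
  refine ⟨r / 2, by positivity, fun Y hY => ?_⟩
  by_contra! H
  have hn : 0 < ‖Y‖ := norm_pos_iff.2 hY
  have hmem : (r / 2 / ‖Y‖) • Y ∈ P := by
    refine interior_subset (hball ?_)
    rw [mem_ball_zero_iff, norm_smul, Real.norm_of_nonneg (by positivity),
      div_mul_cancel₀ _ hn.ne']
    linarith
  rw [hP] at hmem
  have : (r / 2 / ‖Y‖) • Y ∈ {x | inner ℝ Y x < r / 2 * ‖Y‖} := by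
    refine convexHull_min ?_ (convex_halfSpace_lt (innerₛₗ ℝ Y).isLinear _) hmem
    rintro _ ⟨i, rfl⟩
    exact H i
  rw [mem_ofPred_eq, inner_smul_right, real_inner_self_eq_norm_sq] at this
  refine this.ne ?_
  field_simp

/-- The theorem for polytopes in an arbitrary Euclidean space, with at least one vertex. -/
theorem exists_linear_symmetry {v : ι → E} {P : Set E} (hP : P = convexHull ℝ (range v))
    (hfull : affineSpan ℝ P = ⊤) (hinj : Function.Injective v)
    (hvert : range v = P.extremePoints ℝ) (h0 : (0 : E) ∈ interior P) (Adj : ι → ι → Prop)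
    (hAdj : ∀ i j, Adj i j ↔ i ≠ j ∧ IsExtreme ℝ P (segment ℝ (v i) (v j)))
    (σ : Equiv.Perm ι) (hσE : ∀ i j, Adj i j ↔ Adj (σ i) (σ j))
    (hvorb : ∀ i, ∃ T : E ≃ₗ[ℝ] E, T '' P = P ∧ T (v i) = v (σ i))
    (heorb : ∀ i j, Adj i j → ∃ T : E ≃ₗ[ℝ] E, T '' P = P ∧
      ({T (v i), T (v j)} : Set E) = {v (σ i), v (σ j)}) :
    ∃ T : E ≃ₗ[ℝ] E, T '' P = P ∧ ∀ i, T (v i) = v (σ i) := by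
  have hv : ∀ i, v i ∈ P.extremePoints ℝ := fun i => hvert ▸ mem_range_self i
  rcases subsingleton_or_nontrivial E with hE | hE
  · refine ⟨LinearEquiv.refl ℝ E, image_id _, fun i => Subsingleton.elim _ _⟩
  have hk : Module.finrank ℝ E ≠ 0 := (Module.finrank_pos (R := ℝ) (M := E)).ne'
  obtain ⟨u, hu, hu1, hu2⟩ := exists_generic hv hinj _ le_rfl
  let b : Module.Basis (Fin (Module.finrank ℝ E)) ℝ E :=
    basisOfLinearIndependentOfCardEqFinrank' u hu (Fintype.card_fin _)
  have hb : ⇑b = u := coe_basisOfLinearIndependentOfCardEqFinrank' u hu (Fintype.card_fin _)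
  set A : Fin (Module.finrank ℝ E) → ι → ℝ := fun p i => inner ℝ (u p) (v i) with hAdef
  have hcomb : ∀ (y) (i), comb A y i = inner ℝ (b.equivFun.symm y) (v i) := by
    intro y i
    simp only [comb, hAdef, b.equivFun_symm_apply, hb, sum_inner, real_inner_smul_left]
  have hcomb' : ∀ (U) (i), comb A (b.equivFun U) i = inner ℝ U (v i) := by
    intro U i
    rw [hcomb, LinearEquiv.symm_apply_apply]
  have hA : Coer A := by
    obtain ⟨r, hr, H⟩ := exists_support hP h0
    obtain ⟨K, hK, hKb⟩ := (b.equivFun.toLinearMap.toContinuousLinearMap).bound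
    refine ⟨r / K, by positivity, fun y => ?_⟩
    rcases eq_or_ne y 0 with rfl | hy
    · exact ⟨Classical.arbitrary ι, by simp [comb_zero]⟩
    obtain ⟨i, hi⟩ := H (b.equivFun.symm y)
      ((map_ne_zero_iff _ b.equivFun.symm.injective).2 hy)
    refine ⟨i, ?_⟩
    rw [hcomb]
    refine le_trans ?_ hi
    have := hKb (b.equivFun.symm y)
    simp only [LinearMap.coe_toContinuousLinearMap', LinearEquiv.coe_coe,
      LinearEquiv.apply_symm_apply] at this
    rw [div_mul_eq_mul_div, div_le_iff₀ hK, mul_assoc, mul_comm _ K]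
    gcongr
  have hG : Good A 0 := by
    refine good_of_generic hu1 hu2 (fun h => absurd h hk) ?_
    -- In dimension one there are no three distinct vertices.
    intro p h1 i j l hij hil hjl
    refine absurd ?_ (not_parallel hv hinj hij hil hjl (s := inner ℝ (u p) (v l - v i))
      (t := inner ℝ (u p) (v j - v i)) ?_)
    · refine InnerProductSpace.ext_inner_left_basis b (𝕜 := ℝ) fun q => ?_
      have : q = p := by
        have := q.2
        have := p.2
        exact Fin.ext (by omega)
      rw [this, hb, inner_zero_right, inner_sub_right, inner_smul_right, inner_smul_right]
      ring
    · rw [inner_sub_right, sub_ne_zero]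
      exact (hu1 p).ne hil.symm
  have hN : ∀ i, 0 < N A 0 i := by
    intro i
    obtain ⟨U, hU⟩ := exists_separating hP hvert hinj i
    refine N_pos hA (y := b.equivFun U) fun j hj => ?_
    simp only [Pi.sub_apply, hcomb', Pi.zero_apply]
    linarith [hU j hj]
  have hmemG : ∀ T : E ≃ₗ[ℝ] E, ∀ τ : Equiv.Perm ι, (∀ i, T (v i) = v (τ i)) →
      τ ∈ symGroup A hA := by
    intro T τ hτ
    refine ⟨b.equivFun.toLinearMap ∘ₗ LinearMap.adjoint T.toLinearMap ∘ₗ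
      b.equivFun.symm.toLinearMap, fun y => funext fun i => ?_⟩
    simp only [Function.comp_apply, LinearMap.comp_apply, LinearEquiv.coe_coe, hcomb', hcomb]
    rw [LinearMap.adjoint_inner_left, LinearEquiv.coe_coe, hτ]
  have hσ := linear_of_orbits hA hG hN Adj (fun i j y hij hy => (hAdj i j).2
    ⟨hij, segment_isExtreme hP ((hcomb y i).symm.trans (hy.1.trans (hcomb y j)))
      fun l h1 h2 => by rw [← hcomb, ← hcomb]; exact hy.2 l h1 h2⟩) σ hσE
    (fun i => by
      obtain ⟨T, hT, hTi⟩ := hvorb i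
      obtain ⟨τ, hτ⟩ := exists_perm hvert hinj T hT
      exact ⟨τ, hmemG T τ hτ, hinj (by rw [← hτ, hTi])⟩)
    (fun i j hadj => by
      obtain ⟨T, hT, hTi⟩ := heorb i j hadj
      obtain ⟨τ, hτ⟩ := exists_perm hvert hinj T hT
      refine ⟨τ, hmemG T τ hτ, ?_⟩
      rw [pair_eq_pair_iff, hτ, hτ] at hTi
      exact hTi.imp (fun h => ⟨hinj h.1, hinj h.2⟩) fun h => ⟨hinj h.1, hinj h.2⟩)
  have hW : ∀ U : E, ∃ W : E, ∀ i, inner ℝ U (v (σ i)) = inner ℝ W (v i) := by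
    intro U
    obtain ⟨X, hX⟩ := hσ (b.equivFun U)
    refine ⟨b.equivFun.symm X, fun i => ?_⟩
    rw [← hcomb, ← hX, Function.comp_apply, hcomb']
  choose W hW using hW
  let e := stdOrthonormalBasis ℝ E
  let T : E →ₗ[ℝ] E := ∑ p, (innerₛₗ ℝ (W (e p))).smulRight (e p)
  have hTv : ∀ i, T (v i) = v (σ i) := by
    intro i
    simp only [T, LinearMap.sum_apply, LinearMap.smulRight_apply, innerₛₗ_apply_apply, ← hW]
    exact e.sum_repr' _
  have hspan : Submodule.span ℝ (range v) = ⊤ := by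
    rw [hP, affineSpan_convexHull] at hfull
    have := affineSpan_subset_span (k := ℝ) (s := range v)
    rw [hfull] at this
    exact eq_top_iff.2 fun x _ => this (AffineSubspace.mem_top ℝ E x)
  have hsurj : Function.Surjective T := by
    rw [← LinearMap.range_eq_top, eq_top_iff, ← hspan, Submodule.span_le]
    rintro _ ⟨i, rfl⟩
    exact ⟨v (σ.symm i), by rw [hTv, σ.apply_symm_apply]⟩
  have hTinj : Function.Injective T := LinearMap.injective_iff_surjective.2 hsurj
  refine ⟨LinearEquiv.ofBijective T ⟨hTinj, hsurj⟩, ?_, hTv⟩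
  have : ⇑(LinearEquiv.ofBijective T ⟨hTinj, hsurj⟩) = T := rfl
  rw [this, hP, T.image_convexHull, ← range_comp]
  congr 1
  rw [show ⇑T ∘ v = v ∘ σ from funext hTv, σ.surjective.range_comp]

end Geometry

end
end EdgeOrbit

/-- (The orbit coloring captures the linear symmetries of `P`.)
If a permutation `σ` of the vertex indices preserves the edge relation, maps each
vertex into its `Aut_GL(P)`-orbit, and maps each edge into its `Aut_GL(P)`-orbit,
then `σ` is induced by a single linear symmetry of `P`. -/
theorem stmt_11 {d n : ℕ}
    (v : Fin n → EuclideanSpace ℝ (Fin d))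
    (P : Set (EuclideanSpace ℝ (Fin d)))
    (hP : P = convexHull ℝ (Set.range v))
    (hfull : affineSpan ℝ P = ⊤)
    (hinj : Function.Injective v)
    (hvert : Set.range v = Set.extremePoints ℝ P)
    (h0 : (0 : EuclideanSpace ℝ (Fin d)) ∈ interior P)
    (Adj : Fin n → Fin n → Prop)
    (hAdj : ∀ i j, Adj i j ↔ i ≠ j ∧ IsExtreme ℝ P (segment ℝ (v i) (v j)))
    (σ : Equiv.Perm (Fin n))
    (hσE : ∀ i j, Adj i j ↔ Adj (σ i) (σ j))
    (hvorb : ∀ i, ∃ T : EuclideanSpace ℝ (Fin d) ≃ₗ[ℝ] EuclideanSpace ℝ (Fin d),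
      ⇑T '' P = P ∧ T (v i) = v (σ i))
    (heorb : ∀ i j, Adj i j →
      ∃ T : EuclideanSpace ℝ (Fin d) ≃ₗ[ℝ] EuclideanSpace ℝ (Fin d),
        ⇑T '' P = P ∧ ({T (v i), T (v j)} : Set (EuclideanSpace ℝ (Fin d)))
          = {v (σ i), v (σ j)}) :
    ∃ T : EuclideanSpace ℝ (Fin d) ≃ₗ[ℝ] EuclideanSpace ℝ (Fin d),
      ⇑T '' P = P ∧ ∀ i, T (v i) = v (σ i) := by
  have : Nonempty (Fin n) := by
    rw [← Set.range_nonempty_iff_nonempty (f := v), ← convexHull_nonempty_iff (𝕜 := ℝ), ← hP]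
    exact ⟨0, interior_subset h0⟩
  exact EdgeOrbit.exists_linear_symmetry hP hfull hinj hvert h0 Adj hAdj σ hσE hvorb heorb
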